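/- There exists a constant c > 0 such that for infinitely many integers D, the Mordell equation y² = x³ + D has more than c·(log|D|)^{17/19} integral solutions; that is, the set {D ∈ ℤ : #{(x, y) ∈ ℤ² : y² = x³ + D} > c·(log|D|)^{17/19}} is infinite. -/

import Mathlib

section
def EC (k : ℤ) : WeierstrassCurve.Affine ℚ :=
  { a₁ := 0, a₂ := 0, a₃ := 0, a₄ := 0, a₆ := (k : ℚ) }

lemma EC_eq {k : ℤ} {x y : ℚ} (h : (EC k).Nonsingular x y) : y ^ 2 = x ^ 3 + k := by
  have := h.1
  rw [WeierstrassCurve.Affine.equation_iff] at this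
  simpa [EC] using this

lemma EC_nonsing {k : ℤ} (hk : k ≠ 0) {x y : ℚ} (h : y ^ 2 = x ^ 3 + k) :
    (EC k).Nonsingular x y := by
  rw [WeierstrassCurve.Affine.nonsingular_iff, WeierstrassCurve.Affine.equation_iff]
  refine ⟨by simpa [EC] using h, ?_⟩
  simp only [EC]
  by_contra hc
  push Not at hc
  obtain ⟨h1, h2⟩ := hc
  have hx : x = 0 := by
    have : x ^ 2 = 0 := by linarith
    simpa using this
  have hy : y = 0 := by linarith
  subst hx hy
  apply hk
  have : (k : ℚ) = 0 := by simpa using h.symm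
  exact_mod_cast this

/-- uniform description of the addition of affine points -/
lemma EC_add {k : ℤ} {x₁ y₁ x₂ y₂ : ℚ} (h₁ : (EC k).Nonsingular x₁ y₁)
    (h₂ : (EC k).Nonsingular x₂ y₂) :
    (x₁ = x₂ ∧ y₁ = - y₂ ∧
      (WeierstrassCurve.Affine.Point.some x₁ y₁ h₁ + .some x₂ y₂ h₂ : (EC k).Point) = 0) ∨
    ∃ (l x₃ y₃ : ℚ) (h₃ : (EC k).Nonsingular x₃ y₃),
      (WeierstrassCurve.Affine.Point.some x₁ y₁ h₁ + .some x₂ y₂ h₂ : (EC k).Point)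
        = .some x₃ y₃ h₃ ∧ x₃ = l ^ 2 - x₁ - x₂ ∧
      ((x₁ ≠ x₂ ∧ l * (x₁ - x₂) = y₁ - y₂) ∨
        (x₁ = x₂ ∧ y₁ = y₂ ∧ y₁ ≠ 0 ∧ l * (2 * y₁) = 3 * x₁ ^ 2)) := by
  by_cases hx : x₁ = x₂
  · by_cases hy : y₁ = - y₂
    · left
      refine ⟨hx, hy, WeierstrassCurve.Affine.Point.add_of_Y_eq hx ?_⟩
      simp [WeierstrassCurve.Affine.negY, EC, hy]
    · right
      have hy' : y₁ ≠ (EC k).negY x₂ y₂ := by simpa [WeierstrassCurve.Affine.negY, EC] using hy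
      have e1 := EC_eq h₁
      have e2 := EC_eq h₂
      have hyy : y₁ = y₂ := by
        have : (y₁ - y₂) * (y₁ + y₂) = 0 := by rw [hx] at e1; linear_combination e1 - e2
        rcases mul_eq_zero.1 this with h | h
        · linarith
        · exact absurd (by linarith) hy
      have hy0 : y₁ ≠ 0 := by
        intro h0; apply hy; rw [← hyy, h0]; simp
      refine ⟨(EC k).slope x₁ x₂ y₁ y₂, _, _, _, WeierstrassCurve.Affine.Point.add_of_Y_ne hy', ?_, Or.inr ⟨hx, hyy, hy0, ?_⟩⟩
      · simp [WeierstrassCurve.Affine.addX, EC]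
      · rw [WeierstrassCurve.Affine.slope_of_Y_ne hx hy']
        simp only [EC, WeierstrassCurve.Affine.negY]
        have h2 : y₁ - (-y₁ - 0 * x₁ - 0) = 2 * y₁ := by ring
        rw [h2, div_mul_cancel₀ _ (by simpa using hy0)]
        ring
  · right
    refine ⟨(EC k).slope x₁ x₂ y₁ y₂, _, _, _, WeierstrassCurve.Affine.Point.add_of_X_ne hx, ?_, Or.inl ⟨hx, ?_⟩⟩
    · simp [WeierstrassCurve.Affine.addX, EC]
    · rw [WeierstrassCurve.Affine.slope_of_X_ne hx]
      have : x₁ - x₂ ≠ 0 := sub_ne_zero.2 hx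
      field_simp

lemma rat_sq_int {r : ℚ} {n : ℤ} (h : r ^ 2 = n) : ∃ m : ℤ, r = m := by
  have : IsIntegral ℤ (r ^ 2) := by rw [h]; exact isIntegral_algebraMap (R := ℤ) (A := ℚ) (x := n)
  obtain ⟨m, hm⟩ := IsIntegrallyClosed.exists_algebraMap_eq_of_isIntegral_pow (R := ℤ) (by norm_num) this
  exact ⟨m, by simpa using hm.symm⟩

def HRep (k H : ℤ) : (EC k).Point → Prop
  | .zero => True
  | .some x y _ => ∃ a b d : ℤ, d ≠ 0 ∧ x = a / d ^ 2 ∧ y = b / d ^ 3 ∧ |a| ≤ H ^ 2 ∧ |d| ≤ H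

lemma HRep_of {k H : ℤ} {x y : ℚ} (h : (EC k).Nonsingular x y) {a d : ℤ} (hd : d ≠ 0)
    (hx : x = a / d ^ 2) (ha : |a| ≤ H ^ 2) (hdH : |d| ≤ H) : HRep k H (.some x y h) := by
  have e := EC_eq h
  have hdq : (d : ℚ) ≠ 0 := by exact_mod_cast hd
  obtain ⟨b, hb⟩ := rat_sq_int (r := y * d ^ 3) (n := a ^ 3 + k * d ^ 6) (by
    rw [mul_pow, e, hx]; push_cast; field_simp)
  refine ⟨a, b, d, hd, hx, ?_, ha, hdH⟩
  rw [← hb]; field_simp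

lemma HRep_add {k H : ℤ} (hk : 0 < k) (hH : 1 ≤ H) {P Q : (EC k).Point} (hP : HRep k H P)
    (hQ : HRep k H Q) : HRep k (8 * (1 + k) * H ^ 4) (P + Q) := by
  have hH4 : H ≤ H ^ 4 := by
    calc H = H ^ 1 := by ring
      _ ≤ H ^ 4 := pow_le_pow_right₀ hH (by norm_num)
  have hmono : ∀ R : (EC k).Point, HRep k H R → HRep k (8 * (1 + k) * H ^ 4) R := by
    intro R hR
    have hle : H ≤ 8 * (1 + k) * H ^ 4 := by nlinarith
    rcases R with _ | ⟨x, y, h⟩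
    · trivial
    · obtain ⟨a, b, d, hd, hx, hy, ha, hdH⟩ := hR
      exact ⟨a, b, d, hd, hx, hy, ha.trans (by gcongr), hdH.trans hle⟩
  rcases P with _ | ⟨x₁, y₁, h₁⟩
  · have : (WeierstrassCurve.Affine.Point.zero + Q : (EC k).Point) = Q := zero_add Q
    rw [this]; exact hmono Q hQ
  rcases Q with _ | ⟨x₂, y₂, h₂⟩
  · have : (WeierstrassCurve.Affine.Point.some x₁ y₁ h₁ + .zero : (EC k).Point) = .some x₁ y₁ h₁ :=
      add_zero _
    rw [this]; exact hmono _ hP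
  have e1 := EC_eq h₁
  have e2 := EC_eq h₂
  obtain ⟨a₁, b₁, d₁, hd₁, hx₁, hy₁, ha₁, hdH₁⟩ := hP
  obtain ⟨a₂, b₂, d₂, hd₂, hx₂, hy₂, ha₂, hdH₂⟩ := hQ
  have hq₁ : (d₁ : ℚ) ≠ 0 := by exact_mod_cast hd₁
  have hq₂ : (d₂ : ℚ) ≠ 0 := by exact_mod_cast hd₂
  have key : ∀ (a b d : ℤ), d ≠ 0 → (b / d ^ 3 : ℚ) ^ 2 = (a / d ^ 2 : ℚ) ^ 3 + k →
      |a| ≤ H ^ 2 → |d| ≤ H → b ^ 2 = a ^ 3 + k * d ^ 6 ∧ b ^ 2 ≤ (1 + k) * H ^ 6 := by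
    intro a b d hd he ha hdH
    have hq : (d : ℚ) ≠ 0 := by exact_mod_cast hd
    have h1 : b ^ 2 = a ^ 3 + k * d ^ 6 := by
      field_simp at he
      have : (b : ℚ) ^ 2 = a ^ 3 + k * d ^ 6 := by linarith
      exact_mod_cast this
    refine ⟨h1, ?_⟩
    have h2 : a ^ 3 ≤ H ^ 6 := by
      calc a ^ 3 ≤ |a ^ 3| := le_abs_self _
        _ = |a| ^ 3 := abs_pow _ _
        _ ≤ (H ^ 2) ^ 3 := by gcongr
        _ = H ^ 6 := by ring
    have h3 : d ^ 6 ≤ H ^ 6 := by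
      calc d ^ 6 ≤ |d ^ 6| := le_abs_self _
        _ = |d| ^ 6 := abs_pow _ _
        _ ≤ H ^ 6 := by gcongr
    nlinarith
  obtain ⟨f1, g1⟩ := key a₁ b₁ d₁ hd₁ (by rw [← hx₁, ← hy₁]; exact e1) ha₁ hdH₁
  obtain ⟨f2, g2⟩ := key a₂ b₂ d₂ hd₂ (by rw [← hx₂, ← hy₂]; exact e2) ha₂ hdH₂
  have hH8 : 1 ≤ H ^ 8 := one_le_pow₀ hH
  rcases EC_add h₁ h₂ with ⟨_, _, h0⟩ | ⟨l, x₃, y₃, h₃, hadd, hx₃, hcase⟩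
  · rw [h0]; trivial
  rw [hadd]
  rcases hcase with ⟨hne, hl⟩ | ⟨hxx, hyy, hy0, hl⟩
  · have hne' : a₁ * d₂ ^ 2 - a₂ * d₁ ^ 2 ≠ 0 := by
      intro h0
      apply hne
      rw [hx₁, hx₂]
      have : (a₁ * d₂ ^ 2 - a₂ * d₁ ^ 2 : ℚ) = 0 := by exact_mod_cast h0
      field_simp
      linarith
    have hneq : (a₁ * d₂ ^ 2 - a₂ * d₁ ^ 2 : ℚ) ≠ 0 := by exact_mod_cast hne'
    refine HRep_of h₃ (a := a₁ * a₂ * (a₁ * d₂ ^ 2 + a₂ * d₁ ^ 2) + 2 * k * d₁ ^ 4 * d₂ ^ 4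
      - 2 * b₁ * b₂ * d₁ * d₂) hne' ?_ ?_ ?_
    · have hl' : l * (d₁ * d₂ * (a₁ * d₂ ^ 2 - a₂ * d₁ ^ 2)) = b₁ * d₂ ^ 3 - b₂ * d₁ ^ 3 := by
        rw [hx₁, hx₂, hy₁, hy₂] at hl
        field_simp at hl
        linear_combination hl
      have f1q : (b₁ : ℚ) ^ 2 = a₁ ^ 3 + k * d₁ ^ 6 := by exact_mod_cast f1
      have f2q : (b₂ : ℚ) ^ 2 = a₂ ^ 3 + k * d₂ ^ 6 := by exact_mod_cast f2
      have hx₁' : x₁ * d₁ ^ 2 = a₁ := by rw [hx₁]; field_simp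
      have hx₂' : x₂ * d₂ ^ 2 = a₂ := by rw [hx₂]; field_simp
      push_cast
      rw [eq_div_iff (pow_ne_zero 2 hneq)]
      have hdd : ((d₁ : ℚ) ^ 2 * d₂ ^ 2) ≠ 0 := by positivity
      apply mul_left_cancel₀ hdd
      rw [hx₃]
      linear_combination (l * (d₁ * d₂ * (a₁ * d₂ ^ 2 - a₂ * d₁ ^ 2)) + (b₁ * d₂ ^ 3 - b₂ * d₁ ^ 3)) * hl'
        - d₂ ^ 2 * (a₁ * d₂ ^ 2 - a₂ * d₁ ^ 2) ^ 2 * hx₁' - d₁ ^ 2 * (a₁ * d₂ ^ 2 - a₂ * d₁ ^ 2) ^ 2 * hx₂'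
        + d₂ ^ 6 * f1q + d₁ ^ 6 * f2q
    · have t1 : |a₁ * a₂ * (a₁ * d₂ ^ 2 + a₂ * d₁ ^ 2)| ≤ 2 * H ^ 8 := by
        calc |a₁ * a₂ * (a₁ * d₂ ^ 2 + a₂ * d₁ ^ 2)|
            = |a₁| * |a₂| * |a₁ * d₂ ^ 2 + a₂ * d₁ ^ 2| := by rw [abs_mul, abs_mul]
          _ ≤ |a₁| * |a₂| * (|a₁| * |d₂| ^ 2 + |a₂| * |d₁| ^ 2) := by
              gcongr
              refine (abs_add_le _ _).trans ?_
              rw [abs_mul, abs_mul, abs_pow, abs_pow]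
          _ ≤ H ^ 2 * H ^ 2 * (H ^ 2 * H ^ 2 + H ^ 2 * H ^ 2) := by gcongr
          _ = 2 * H ^ 8 := by ring
      have t2 : |2 * k * d₁ ^ 4 * d₂ ^ 4| ≤ 2 * k * H ^ 8 := by
        calc |2 * k * d₁ ^ 4 * d₂ ^ 4| = 2 * k * |d₁| ^ 4 * |d₂| ^ 4 := by
              rw [abs_mul, abs_mul, abs_pow, abs_pow, abs_of_pos (by positivity : 0 < 2 * k)]
          _ ≤ 2 * k * H ^ 4 * H ^ 4 := by gcongr
          _ = _ := by ring
      have t3 : |2 * b₁ * b₂ * d₁ * d₂| ≤ 2 * (1 + k) * H ^ 8 := by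
        have hb : |2 * b₁ * b₂| ≤ 2 * ((1 + k) * H ^ 6) := by
          rw [abs_le]; constructor <;> nlinarith [sq_nonneg (b₁ + b₂), sq_nonneg (b₁ - b₂)]
        calc |2 * b₁ * b₂ * d₁ * d₂| = |2 * b₁ * b₂| * |d₁| * |d₂| := by rw [abs_mul, abs_mul]
          _ ≤ 2 * ((1 + k) * H ^ 6) * H * H := by gcongr
          _ = _ := by ring
      have := abs_sub (a₁ * a₂ * (a₁ * d₂ ^ 2 + a₂ * d₁ ^ 2) + 2 * k * d₁ ^ 4 * d₂ ^ 4)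
        (2 * b₁ * b₂ * d₁ * d₂)
      have := abs_add_le (a₁ * a₂ * (a₁ * d₂ ^ 2 + a₂ * d₁ ^ 2)) (2 * k * d₁ ^ 4 * d₂ ^ 4)
      have hfin : (8 * (1 + k) * H ^ 4) ^ 2 = 64 * (1 + k) ^ 2 * H ^ 8 := by ring
      rw [hfin]
      nlinarith [mul_pos hk (by positivity : 0 < H ^ 8), mul_pos hk hk]
    · calc |a₁ * d₂ ^ 2 - a₂ * d₁ ^ 2| ≤ |a₁| * |d₂| ^ 2 + |a₂| * |d₁| ^ 2 := by
            refine (abs_sub _ _).trans ?_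
            rw [abs_mul, abs_mul, abs_pow, abs_pow]
        _ ≤ H ^ 2 * H ^ 2 + H ^ 2 * H ^ 2 := by gcongr
        _ ≤ _ := by nlinarith [mul_pos hk (by positivity : 0 < H ^ 4), (by positivity : 0 < H ^ 4)]
  · have hb0 : b₁ ≠ 0 := by
      rintro rfl; apply hy0; rw [hy₁]; simp
    have hbq : (b₁ : ℚ) ≠ 0 := by exact_mod_cast hb0
    have f1q : (b₁ : ℚ) ^ 2 = a₁ ^ 3 + k * d₁ ^ 6 := by exact_mod_cast f1
    refine HRep_of h₃ (a := a₁ * (a₁ ^ 3 - 8 * k * d₁ ^ 6)) (d := 2 * d₁ * b₁) (by simp [hb0, hd₁]) ?_ ?_ ?_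
    · have hl' : l = 3 * a₁ ^ 2 / (2 * d₁ * b₁) := by
        rw [hx₁, hy₁] at hl
        field_simp at hl ⊢
        linear_combination hl
      rw [hx₃, ← hxx, hl', hx₁]
      push_cast
      field_simp
      linear_combination (-8) * a₁ * f1q
    · calc |a₁ * (a₁ ^ 3 - 8 * k * d₁ ^ 6)| ≤ |a₁| * (|a₁| ^ 3 + 8 * k * |d₁| ^ 6) := by
            rw [abs_mul]
            gcongr
            refine (abs_sub _ _).trans ?_
            rw [abs_mul, abs_pow, abs_pow, abs_of_pos (by positivity : 0 < 8 * k)]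
        _ ≤ H ^ 2 * ((H ^ 2) ^ 3 + 8 * k * H ^ 6) := by gcongr
        _ = (1 + 8 * k) * H ^ 8 := by ring
        _ ≤ (64 * (1 + k) ^ 2) * H ^ 8 := by gcongr; nlinarith
        _ = _ := by ring
    · apply abs_le_of_sq_le_sq _ (by positivity)
      calc (2 * d₁ * b₁) ^ 2 = 4 * |d₁| ^ 2 * b₁ ^ 2 := by rw [sq_abs]; ring
        _ ≤ 4 * H ^ 2 * ((1 + k) * H ^ 6) := by gcongr
        _ = (4 * (1 + k)) * H ^ 8 := by ring
        _ ≤ (64 * (1 + k) ^ 2) * H ^ 8 := by refine mul_le_mul_of_nonneg_right ?_ (by positivity); nlinarith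
        _ = _ := by ring
end

section
lemma HRep_mono {k H H' : ℤ} (h0 : 0 ≤ H) (h : H ≤ H') {P : (EC k).Point} (hP : HRep k H P) : HRep k H' P := by
  rcases P with _ | ⟨x, y, hh⟩
  · trivial
  · obtain ⟨a, b, d, hd, hx, hy, ha, hdH⟩ := hP
    exact ⟨a, b, d, hd, hx, hy, ha.trans (by gcongr), hdH.trans h⟩

lemma exists_common {α : Type*} {k : ℤ} (s : Finset α) (f : α → (EC k).Point)
    (h : ∀ i ∈ s, ∃ H : ℤ, 1 ≤ H ∧ HRep k H (f i)) : ∃ H : ℤ, 1 ≤ H ∧ ∀ i ∈ s, HRep k H (f i) := by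
  classical
  induction s using Finset.induction_on with
  | empty => exact ⟨1, le_rfl, by simp⟩
  | insert a s ha ih =>
    obtain ⟨H1, h1, h1'⟩ := ih (fun i hi => h i (Finset.mem_insert_of_mem hi))
    obtain ⟨H2, h2, h2'⟩ := h a (Finset.mem_insert_self _ _)
    refine ⟨max H1 H2, le_max_of_le_left h1, ?_⟩
    intro i hi
    rcases Finset.mem_insert.1 hi with rfl | hi
    · exact HRep_mono (by omega) (le_max_right _ _) h2'
    · exact HRep_mono (by omega) (le_max_left _ _) (h1' i hi)

lemma HRep_add_exists {k : ℤ} (hk : 0 < k) {P Q : (EC k).Point} (hP : ∃ H : ℤ, 1 ≤ H ∧ HRep k H P)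
    (hQ : ∃ H : ℤ, 1 ≤ H ∧ HRep k H Q) : ∃ H : ℤ, 1 ≤ H ∧ HRep k H (P + Q) := by
  obtain ⟨H1, h1, h1'⟩ := hP
  obtain ⟨H2, h2, h2'⟩ := hQ
  have hm : 1 ≤ max H1 H2 := le_max_of_le_left h1
  refine ⟨_, ?_, HRep_add hk hm (HRep_mono (by omega) (le_max_left _ _) h1')
    (HRep_mono (by omega) (le_max_right _ _) h2')⟩
  have := one_le_pow₀ (n := 4) hm
  nlinarith

lemma HRep_sum_exists {k : ℤ} (hk : 0 < k) {ι : Type*} (s : Finset ι) (P : ι → (EC k).Point)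
    (hP : ∀ i, ∃ H : ℤ, 1 ≤ H ∧ HRep k H (P i)) (n : ι → ℕ) :
    ∃ H : ℤ, 1 ≤ H ∧ HRep k H (∑ i ∈ s, n i • P i) := by
  classical
  induction s using Finset.induction_on with
  | empty => exact ⟨1, le_rfl, by simp only [Finset.sum_empty]; trivial⟩
  | insert a s ha ih =>
    rw [Finset.sum_insert ha]
    refine HRep_add_exists hk ?_ ih
    induction n a with
    | zero => exact ⟨1, le_rfl, by rw [zero_nsmul]; trivial⟩
    | succ m ihm => rw [succ_nsmul]; exact HRep_add_exists hk ihm (hP a)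

lemma box_rep {k : ℤ} (hk : 0 < k) {ι : Type*} [Fintype ι] [DecidableEq ι] (P : ι → (EC k).Point)
    (hP : ∀ i, ∃ H : ℤ, 1 ≤ H ∧ HRep k H (P i)) :
    ∃ B : ℝ, 0 ≤ B ∧ ∀ s : ℕ, ∃ H : ℤ, 1 ≤ H ∧ Real.log H ≤ B * 4 ^ s ∧
      ∀ n : ι → ℕ, (∀ i, n i ≤ 2 ^ s) → HRep k H (∑ i, n i • P i) := by
  obtain ⟨H0, h0, h0'⟩ := exists_common (Fintype.piFinset (fun _ : ι => Finset.range 2))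
    (fun n : ι → ℕ => ∑ i, n i • P i) (fun n _ => HRep_sum_exists hk _ P hP n)
  set C : ℤ := 8 * (1 + k) with hC
  have hC1 : 1 ≤ C := by omega
  have hlC : 0 ≤ Real.log C := Real.log_nonneg (by exact_mod_cast hC1)
  have hlH : 0 ≤ Real.log H0 := Real.log_nonneg (by exact_mod_cast h0)
  refine ⟨Real.log H0 + Real.log C, by positivity, ?_⟩
  suffices hs : ∀ s : ℕ, ∃ H : ℤ, 1 ≤ H ∧
      Real.log H ≤ (Real.log H0 + Real.log C) * 4 ^ s - Real.log C ∧
      ∀ n : ι → ℕ, (∀ i, n i ≤ 2 ^ s) → HRep k H (∑ i, n i • P i) by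
    intro s
    obtain ⟨H, a, b, c⟩ := hs s
    exact ⟨H, a, by linarith, c⟩
  intro s
  induction s with
  | zero =>
    refine ⟨H0, h0, by simp, fun n hn => h0' n ?_⟩
    rw [Fintype.mem_piFinset]
    intro i
    have := hn i
    simp at this ⊢
    omega
  | succ s ih =>
    obtain ⟨H, h1, h2, h3⟩ := ih
    have hH4 : 1 ≤ H ^ 4 := one_le_pow₀ h1
    refine ⟨C * H ^ 4, by nlinarith, ?_, ?_⟩
    · push_cast
      rw [Real.log_mul (by exact_mod_cast (by omega)) (by exact_mod_cast (by omega)), Real.log_pow, pow_succ]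
      push_cast
      nlinarith
    · intro n hn
      have e : ∑ i, n i • P i = ∑ i, (n i / 2) • P i + ∑ i, (n i - n i / 2) • P i := by
        rw [← Finset.sum_add_distrib]
        refine Finset.sum_congr rfl fun i _ => ?_
        rw [← add_smul]
        congr 1
        omega
      rw [e]
      apply HRep_add hk h1
      · apply h3; intro i; have := hn i; rw [pow_succ] at this; omega
      · apply h3; intro i; have := hn i; rw [pow_succ] at this; omega

set_option maxHeartbeats 1000000 in
theorem main_of {k : ℤ} (hk : 0 < k) (P : Fin 17 → (EC k).Point)
    (hP : ∀ i, ∃ H : ℤ, 1 ≤ H ∧ HRep k H (P i))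
    (hinj : Function.Injective (fun n : Fin 17 → ℕ => ∑ i, n i • P i))
    (hfin : ∀ D : ℤ, 0 < D → {p : ℤ × ℤ | p.2 ^ 2 = p.1 ^ 3 + D}.Finite) :
    ∃ c : ℝ, 0 < c ∧
      {D : ℤ | c * Real.log |(D : ℝ)| ^ ((17 : ℝ) / 19) <
        (Set.ncard {p : ℤ × ℤ | p.2 ^ 2 = p.1 ^ 3 + D} : ℝ)}.Infinite := by
  obtain ⟨B, hB0, hB⟩ := box_rep hk P hP
  have hlk : 0 ≤ Real.log k := Real.log_nonneg (by exact_mod_cast hk)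
  set C1 : ℝ := Real.log k + 6 * 2 ^ 17 * B + 1 with hC1
  have hC1pos : 0 < C1 := by positivity
  have hkey : ∀ s : ℕ, ∃ D : ℤ, 0 < D ∧ Real.log |(D : ℝ)| ≤ C1 * (2 ^ s) ^ 19 ∧
      (2 ^ s) ^ 17 ≤ Set.ncard {p : ℤ × ℤ | p.2 ^ 2 = p.1 ^ 3 + D} := by
    intro s
    obtain ⟨H, hH1, hHB, hbox⟩ := hB s
    set T : Finset (Fin 17 → ℕ) := (Fintype.piFinset (fun _ => Finset.range (2 ^ s + 1))).erase 0 with hT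
    have hTcard : T.card = (2 ^ s + 1) ^ 17 - 1 := by
      rw [hT, Finset.card_erase_of_mem (by simp [Fintype.mem_piFinset]), Fintype.card_piFinset]
      simp
    have hrep : ∀ n : Fin 17 → ℕ, ∃ a b d : ℤ, n ∈ T → d ≠ 0 ∧ |d| ≤ H ∧
        ∃ h : (EC k).Nonsingular (a / d ^ 2) (b / d ^ 3), ∑ i, n i • P i = .some _ _ h := by
      intro n
      by_cases hn : n ∈ T
      · rw [hT, Finset.mem_erase, Fintype.mem_piFinset] at hn
        have h1 := hbox n (fun i => by have := hn.2 i; simp at this; omega)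
        have h2 : ∑ i, n i • P i ≠ 0 := by
          intro h0
          apply hn.1
          apply hinj
          simpa using h0
        revert h1 h2
        generalize ∑ i, n i • P i = Q
        intro h1 h2
        rcases Q with _ | ⟨x, y, h⟩
        · exact absurd rfl h2
        · obtain ⟨a, b, d, hd, hx, hy, ha, hdH⟩ := h1
          subst hx hy
          exact ⟨a, b, d, fun _ => ⟨hd, hdH, h, rfl⟩⟩
      · exact ⟨0, 0, 0, fun h => absurd h hn⟩
    choose a b d hd using hrep
    set M : ℤ := ∏ n ∈ T, d n with hM
    have hM0 : M ≠ 0 := Finset.prod_ne_zero_iff.2 fun n hn => (hd n hn).1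
    have hdvd : ∀ n ∈ T, d n ∣ M := fun n hn => Finset.dvd_prod_of_mem _ hn
    have hDpos : 0 < k * M ^ 6 := by positivity
    refine ⟨k * M ^ 6, hDpos, ?_, ?_⟩
    · have hlM : Real.log |(M : ℝ)| ≤ T.card * (B * 4 ^ s) := by
        rw [hM]
        push_cast
        rw [Finset.abs_prod, Real.log_prod (fun n hn => by
          have := (hd n hn).1
          simpa using this)]
        rw [← nsmul_eq_mul]
        apply Finset.sum_le_card_nsmul
        intro n hn
        refine le_trans (Real.log_le_log ?_ ?_) hHB
        · have := (hd n hn).1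
          simpa using this
        · exact_mod_cast (hd n hn).2.1
      have hTr : (T.card : ℝ) ≤ (2 ^ 17 : ℝ) * (2 ^ s) ^ 17 := by
        have : T.card ≤ 2 ^ 17 * (2 ^ s) ^ 17 := by
          rw [hTcard, ← mul_pow]
          refine (Nat.sub_le _ _).trans (Nat.pow_le_pow_left ?_ _)
          have := Nat.one_le_two_pow (n := s)
          omega
        exact_mod_cast this
      have h4 : (4 : ℝ) ^ s = (2 ^ s) ^ 2 := by
        rw [← pow_mul, mul_comm, pow_mul]; norm_num
      have h1s : (1 : ℝ) ≤ (2 ^ s) ^ 19 := one_le_pow₀ (one_le_pow₀ (by norm_num))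
      push_cast
      rw [abs_mul, abs_pow, abs_of_pos (by exact_mod_cast hk : (0 : ℝ) < k),
        Real.log_mul (by exact_mod_cast hk.ne') (by simpa using hM0), Real.log_pow]
      calc Real.log k + (6 : ℕ) * Real.log |(M : ℝ)|
          ≤ Real.log k + 6 * (((2 ^ 17 : ℝ) * (2 ^ s) ^ 17) * (B * 4 ^ s)) := by
            push_cast
            gcongr
            exact hlM.trans (by gcongr)
        _ = Real.log k * 1 + 6 * 2 ^ 17 * B * (2 ^ s) ^ 19 := by rw [h4]; ring
        _ ≤ Real.log k * (2 ^ s) ^ 19 + 6 * 2 ^ 17 * B * (2 ^ s) ^ 19 := by gcongr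
        _ ≤ C1 * (2 ^ s) ^ 19 := by rw [hC1, add_mul, add_mul]; linarith
    · have hcard : (2 ^ s) ^ 17 ≤ T.card := by
        rw [hTcard]
        have := Nat.pow_lt_pow_left (Nat.lt_succ_self (2 ^ s)) (n := 17) (by norm_num)
        have h2 : (2 ^ s).succ = 2 ^ s + 1 := rfl
        rw [h2] at this
        omega
      refine hcard.trans ?_
      rw [← Set.ncard_coe_finset T]
      refine Set.ncard_le_ncard_of_injOn (fun n => (a n * (M / d n) ^ 2, b n * (M / d n) ^ 3)) ?_ ?_ (hfin _ hDpos)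
      · intro n hn
        have hn' : n ∈ T := hn
        obtain ⟨h0, _, h, _⟩ := hd n hn'
        obtain ⟨e, he⟩ := hdvd n hn'
        have hq : M / d n = e := by rw [he]; exact Int.mul_ediv_cancel_left _ h0
        have heq := EC_eq h
        have h0q : (d n : ℚ) ≠ 0 := by exact_mod_cast h0
        have hz : b n ^ 2 = a n ^ 3 + k * d n ^ 6 := by
          field_simp at heq
          have : (b n : ℚ) ^ 2 = a n ^ 3 + k * d n ^ 6 := by linarith
          exact_mod_cast this
        simp only [Set.mem_ofPred_eq, hq]
        rw [he]
        linear_combination e ^ 6 * hz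
      · intro n hn m hm hnm
        have hn' : n ∈ T := hn
        have hm' : m ∈ T := hm
        obtain ⟨h0, _, h, hs1⟩ := hd n hn'
        obtain ⟨h0m, _, h', hs2⟩ := hd m hm'
        obtain ⟨e, he⟩ := hdvd n hn'
        obtain ⟨e', he'⟩ := hdvd m hm'
        have hq : M / d n = e := by rw [he]; exact Int.mul_ediv_cancel_left _ h0
        have hq' : M / d m = e' := by rw [he']; exact Int.mul_ediv_cancel_left _ h0m
        simp only [hq, hq', Prod.mk.injEq] at hnm
        have hMq : (M : ℚ) ≠ 0 := by exact_mod_cast hM0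
        have h0q : (d n : ℚ) ≠ 0 := by exact_mod_cast h0
        have h0mq : (d m : ℚ) ≠ 0 := by exact_mod_cast h0m
        have heq : (M : ℚ) = d n * e := by exact_mod_cast he
        have heq' : (M : ℚ) = d m * e' := by exact_mod_cast he'
        have hx1 : (a n : ℚ) * e ^ 2 = a m * e' ^ 2 := by exact_mod_cast hnm.1
        have hy1 : (b n : ℚ) * e ^ 3 = b m * e' ^ 3 := by exact_mod_cast hnm.2
        have hx : (a n / d n ^ 2 : ℚ) = a m / d m ^ 2 := by
          have e1 : (a n / d n ^ 2 : ℚ) * M ^ 2 = a n * e ^ 2 := by rw [heq]; field_simp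
          have e2 : (a m / d m ^ 2 : ℚ) * M ^ 2 = a m * e' ^ 2 := by rw [heq']; field_simp
          exact mul_right_cancel₀ (pow_ne_zero 2 hMq) (by rw [e1, e2, hx1])
        have hy : (b n / d n ^ 3 : ℚ) = b m / d m ^ 3 := by
          have e1 : (b n / d n ^ 3 : ℚ) * M ^ 3 = b n * e ^ 3 := by rw [heq]; field_simp
          have e2 : (b m / d m ^ 3 : ℚ) * M ^ 3 = b m * e' ^ 3 := by rw [heq']; field_simp
          exact mul_right_cancel₀ (pow_ne_zero 3 hMq) (by rw [e1, e2, hy1])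
        apply hinj
        change ∑ i, n i • P i = ∑ i, m i • P i
        rw [hs1, hs2]
        simp only [WeierstrassCurve.Affine.Point.some.injEq]
        exact ⟨hx, hy⟩
  refine ⟨1 / (2 * C1 ^ ((17 : ℝ) / 19)), by positivity, ?_⟩
  intro hfinite
  obtain ⟨L, hL⟩ := (hfinite.image (fun D : ℤ => Set.ncard {p : ℤ × ℤ | p.2 ^ 2 = p.1 ^ 3 + D})).bddAbove
  obtain ⟨D, hD0, hD1, hD2⟩ := hkey L
  have hlog0 : 0 ≤ Real.log |(D : ℝ)| := by
    apply Real.log_nonneg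
    rw [abs_of_pos (by exact_mod_cast hD0)]
    exact_mod_cast hD0
  have hmem : D ∈ {D : ℤ | 1 / (2 * C1 ^ ((17 : ℝ) / 19)) * Real.log |(D : ℝ)| ^ ((17 : ℝ) / 19) <
        (Set.ncard {p : ℤ × ℤ | p.2 ^ 2 = p.1 ^ 3 + D} : ℝ)} := by
    have h1 : Real.log |(D : ℝ)| ^ ((17 : ℝ) / 19) ≤ C1 ^ ((17 : ℝ) / 19) * (2 ^ L) ^ 17 := by
      calc Real.log |(D : ℝ)| ^ ((17 : ℝ) / 19) ≤ (C1 * (2 ^ L) ^ 19) ^ ((17 : ℝ) / 19) := by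
            gcongr
        _ = C1 ^ ((17 : ℝ) / 19) * (2 ^ L) ^ 17 := by
            rw [Real.mul_rpow hC1pos.le (by positivity)]
            congr 1
            rw [← Real.rpow_natCast ((2 : ℝ) ^ L) 19, ← Real.rpow_natCast ((2 : ℝ) ^ L) 17,
              ← Real.rpow_mul (by positivity)]
            norm_num
    have h2 : ((2 : ℝ) ^ L) ^ 17 ≤ (Set.ncard {p : ℤ × ℤ | p.2 ^ 2 = p.1 ^ 3 + D} : ℝ) := by
      exact_mod_cast hD2
    have h3 : (0 : ℝ) < (2 ^ L) ^ 17 := by positivity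
    have h4 : 0 < C1 ^ ((17 : ℝ) / 19) := by positivity
    rw [Set.mem_ofPred_eq]
    calc 1 / (2 * C1 ^ ((17 : ℝ) / 19)) * Real.log |(D : ℝ)| ^ ((17 : ℝ) / 19)
        ≤ 1 / (2 * C1 ^ ((17 : ℝ) / 19)) * (C1 ^ ((17 : ℝ) / 19) * (2 ^ L) ^ 17) := by gcongr
      _ = (2 ^ L) ^ 17 / 2 := by field_simp
      _ < _ := by linarith
  have h5 := hL (Set.mem_image_of_mem _ hmem)
  have h6 : L < 2 ^ L := Nat.lt_two_pow_self
  have h7 : 2 ^ L ≤ (2 ^ L) ^ 17 := Nat.le_self_pow (by norm_num) _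
  have h8 : Set.ncard {p : ℤ × ℤ | p.2 ^ 2 = p.1 ^ 3 + D} ≤ L := h5
  omega
end

section
lemma exists_chi (p : ℕ) [Fact p.Prime] : ∃ χ : ℚ_[p] → ℤ,
    (∀ x y, x ≠ 0 → y ≠ 0 → χ (x * y) = χ x * χ y) ∧ (∀ x, x ≠ 0 → χ x = 1 ∨ χ x = -1) ∧
    ∀ z : ℤ_[p], PadicInt.toZMod z ≠ 0 → χ z = quadraticChar (ZMod p) (PadicInt.toZMod z) := by
  have hp0 : (p : ℚ_[p]) ≠ 0 := by exact_mod_cast (Fact.out : p.Prime).ne_zero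
  have hpR : (p : ℝ) ≠ 0 := by exact_mod_cast (Fact.out : p.Prime).ne_zero
  have hn : ∀ x : ℚ_[p], x ≠ 0 → ‖x * (p : ℚ_[p]) ^ (- x.valuation)‖ = 1 := by
    intro x hx
    rw [norm_mul, Padic.norm_eq_zpow_neg_valuation hx, norm_zpow, Padic.norm_p, inv_zpow', neg_neg,
      ← zpow_add₀ hpR]
    simp
  have hu : ∀ x : ℚ_[p], ∃ u : ℤ_[p], x ≠ 0 → (u : ℚ_[p]) = x * (p : ℚ_[p]) ^ (- x.valuation) := by
    intro x
    by_cases hx : x = 0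
    · exact ⟨0, fun h => absurd hx h⟩
    · exact ⟨⟨_, (hn x hx).le⟩, fun _ => rfl⟩
  have hunit : ∀ z : ℤ_[p], PadicInt.toZMod z ≠ 0 ↔ ‖z‖ = 1 := by
    intro z
    rw [← PadicInt.isUnit_iff, ne_eq, ← RingHom.mem_ker, PadicInt.ker_toZMod,
      IsLocalRing.mem_maximalIdeal, mem_nonunits_iff, not_not]
  choose u hu using hu
  refine ⟨fun x => quadraticChar (ZMod p) (PadicInt.toZMod (u x)), ?_, ?_, ?_⟩
  · intro x y hx hy
    have : u (x * y) = u x * u y := by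
      apply PadicInt.ext
      push_cast
      rw [hu _ (mul_ne_zero hx hy), hu _ hx, hu _ hy, Padic.valuation_mul hx hy, neg_add,
        zpow_add₀ hp0]
      ring
    simp only [this, map_mul]
  · intro x hx
    apply quadraticChar_dichotomy
    rw [hunit, PadicInt.norm_def, hu _ hx, hn x hx]
  · intro z hz
    have hz1 := (hunit z).1 hz
    have hz0 : (z : ℚ_[p]) ≠ 0 := by
      intro h
      have : z = 0 := PadicInt.ext (by simpa using h)
      simp [this] at hz
    have hv : (z : ℚ_[p]).valuation = 0 := by
      have := Padic.norm_eq_zpow_neg_valuation hz0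
      rw [← PadicInt.norm_def, hz1] at this
      have h1 : (1 : ℝ) < p := by exact_mod_cast (Fact.out : p.Prime).one_lt
      have h2 := (zpow_eq_one_iff_right₀ (by positivity) h1.ne').1 this.symm
      omega
    have : u z = z := by
      apply PadicInt.ext
      rw [hu _ hz0, hv]; simp
    simp only [this]

lemma exists_theta (p : ℕ) [Fact p.Prime] (k t : ℤ) (h1 : (p : ℤ) ∣ t ^ 3 + k)
    (h2 : ¬ (p : ℤ) ∣ 3 * t ^ 2) : ∃ θ : ℤ_[p], θ ^ 3 = - (k : ℤ_[p]) ∧ PadicInt.toZMod θ = (t : ZMod p) := by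
  have e1 : ‖((t : ℤ_[p]) ^ 3 + (k : ℤ_[p]))‖ < 1 := by
    rw [← PadicInt.norm_int_lt_one_iff_dvd] at h1
    exact_mod_cast h1
  have e2 : ‖(3 * (t : ℤ_[p]) ^ 2)‖ = 1 := by
    rw [← PadicInt.norm_int_lt_one_iff_dvd] at h2
    push_cast at h2
    exact le_antisymm (PadicInt.norm_le_one _) (not_lt.1 h2)
  have hder : (Polynomial.aeval (t : ℤ_[p])) (Polynomial.derivative (Polynomial.X ^ 3 + Polynomial.C k)) = 3 * (t : ℤ_[p]) ^ 2 := by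
    simp [map_ofNat]
  have hev : (Polynomial.aeval (t : ℤ_[p])) (Polynomial.X ^ 3 + Polynomial.C k) = (t : ℤ_[p]) ^ 3 + k := by
    simp
  have hH := hensels_lemma (p := p) (R := ℤ) (F := Polynomial.X ^ 3 + Polynomial.C k) (a := (t : ℤ_[p]))
    (by rw [hder, e2, hev, one_pow]; exact e1)
  obtain ⟨z, hz, hz2, -⟩ := hH
  refine ⟨z, ?_, ?_⟩
  · simp at hz
    exact eq_neg_of_add_eq_zero_left hz
  · have e3 : ‖z - t‖ < 1 := by rw [hder, e2] at hz2; exact hz2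
    have : z - t ∈ IsLocalRing.maximalIdeal ℤ_[p] := by
      rw [IsLocalRing.mem_maximalIdeal, mem_nonunits_iff, PadicInt.isUnit_iff]; exact e3.ne
    rw [← PadicInt.ker_toZMod, RingHom.mem_ker, map_sub, map_intCast, sub_eq_zero] at this
    exact this

lemma exists_nu (p : ℕ) [Fact p.Prime] (k t : ℤ) (h1 : (p : ℤ) ∣ t ^ 3 + k)
    (h2 : ¬ (p : ℤ) ∣ 3 * t ^ 2) (hk : ∀ x : ℚ, x ^ 3 ≠ - (k : ℚ)) :
    ∃ ν : (EC k).Point →+ ZMod 2, ∀ (a d : ℤ) (x y : ℚ) (h : (EC k).Nonsingular x y),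
      x = a / d ^ 2 → ¬ (p : ℤ) ∣ d → ¬ (p : ℤ) ∣ a - t * d ^ 2 →
      ν (.some x y h) = if (p : ℤ) ∣ (a - t * d ^ 2) ^ (p / 2) - 1 then 0 else 1 := by
  obtain ⟨χ, hm, hd, hz⟩ := exists_chi p
  obtain ⟨θ, hθ, hθt⟩ := exists_theta p k t h1 h2
  have hθ' : (θ : ℚ_[p]) ^ 3 = - (k : ℚ_[p]) := by exact_mod_cast congrArg (Subtype.val) hθ
  have hne : ∀ x : ℚ, (x : ℚ_[p]) - θ ≠ 0 := by
    intro x hx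
    rw [sub_eq_zero] at hx
    rw [← hx] at hθ'
    exact hk x (by exact_mod_cast hθ')
  have hsq : ∀ x, x ≠ 0 → χ (x * x) = 1 := by
    intro x hx
    rw [hm x x hx hx]
    rcases hd x hx with h | h <;> rw [h] <;> norm_num
  let μ : (EC k).Point → ℤ := fun P => match P with
    | .zero => 1
    | .some x y _ => χ ((x : ℚ_[p]) - θ)
  have μ0 : μ 0 = 1 := rfl
  have μs : ∀ x y h, μ (.some x y h) = χ ((x : ℚ_[p]) - θ) := fun x y h => rfl
  have μd : ∀ P, μ P = 1 ∨ μ P = -1 := by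
    intro P
    rcases P with _ | ⟨x, y, h⟩
    · left; rfl
    · exact hd _ (hne x)
  have μa : ∀ P Q, μ (P + Q) = μ P * μ Q := by
    intro P Q
    rcases P with _ | ⟨x₁, y₁, H1⟩
    · change μ (0 + Q) = μ 0 * μ Q
      rw [zero_add, μ0, one_mul]
    rcases Q with _ | ⟨x₂, y₂, H2⟩
    · change μ (.some x₁ y₁ H1 + 0) = μ (.some x₁ y₁ H1) * μ 0
      rw [add_zero, μ0, mul_one]
    have E1 := EC_eq H1
    have E2 := EC_eq H2
    rcases EC_add H1 H2 with ⟨hx, -, hs⟩ | ⟨l, x₃, y₃, H3, hs, hx3, hl⟩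
    · rw [hs, μ0, μs x₁ y₁ H1, μs x₂ y₂ H2, hx, ← hm _ _ (hne _) (hne _), hsq _ (hne _)]
    · rw [hs, μs x₃ y₃ H3, μs x₁ y₁ H1, μs x₂ y₂ H2]
      have key : ((x₁ : ℚ_[p]) - θ) * ((x₂ : ℚ_[p]) - θ) * ((x₃ : ℚ_[p]) - θ) =
          (l * (θ - x₁) + y₁) * (l * (θ - x₁) + y₁) := by
        have E1' : (y₁ : ℚ_[p]) ^ 2 = x₁ ^ 3 + k := by exact_mod_cast congrArg (Rat.cast (K := ℚ_[p])) E1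
        have E2' : (y₂ : ℚ_[p]) ^ 2 = x₂ ^ 3 + k := by exact_mod_cast congrArg (Rat.cast (K := ℚ_[p])) E2
        have hx3' : (x₃ : ℚ_[p]) = l ^ 2 - x₁ - x₂ := by exact_mod_cast congrArg (Rat.cast (K := ℚ_[p])) hx3
        rcases hl with ⟨hne12, hl⟩ | ⟨hx, hy, hy0, hl⟩
        · have hl' : (l : ℚ_[p]) * (x₁ - x₂) = y₁ - y₂ := by exact_mod_cast congrArg (Rat.cast (K := ℚ_[p])) hl
          have hn' : (x₁ : ℚ_[p]) - x₂ ≠ 0 := by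
            rw [sub_ne_zero]; exact_mod_cast hne12
          have : (y₂ : ℚ_[p]) = y₁ - l * (x₁ - x₂) := by rw [hl']; ring
          rw [this] at E2'
          have F : (l : ℚ_[p]) ^ 2 * (x₁ - x₂) - 2 * l * y₁ + (x₁ ^ 2 + x₁ * x₂ + x₂ ^ 2) = 0 := by
            apply mul_left_cancel₀ hn'
            linear_combination E2' - E1'
          rw [hx3']
          linear_combination -hθ' + (θ - x₁) * F - E1'
        · have hl' : (l : ℚ_[p]) * (2 * y₁) = 3 * x₁ ^ 2 := by exact_mod_cast congrArg (Rat.cast (K := ℚ_[p])) hl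
          rw [hx3', ← hx]
          linear_combination -hθ' - (θ - x₁) * hl' - E1'
      have hne0 : (l * (θ - x₁) + y₁ : ℚ_[p]) ≠ 0 := by
        intro h0
        rw [h0, mul_zero] at key
        exact mul_ne_zero (mul_ne_zero (hne _) (hne _)) (hne _) key
      have hk2 := hsq _ hne0
      rw [← key, hm _ _ (mul_ne_zero (hne _) (hne _)) (hne _), hm _ _ (hne _) (hne _)] at hk2
      rcases hd _ (hne x₁) with h | h <;> rcases hd _ (hne x₂) with h' | h' <;>
        rw [h, h'] at hk2 ⊢ <;> linarith
  let ν : (EC k).Point →+ ZMod 2 :=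
    { toFun := fun P => if μ P = 1 then 0 else 1
      map_zero' := by simp [μ0]
      map_add' := by
        intro P Q
        rw [μa]
        rcases μd P with h | h <;> rcases μd Q with h' | h' <;> rw [h, h'] <;> decide }
  refine ⟨ν, ?_⟩
  intro a d x y h hx hpd hpa
  have hd0 : d ≠ 0 := by rintro rfl; simp at hpd
  have hdp : (d : ℚ_[p]) ≠ 0 := by exact_mod_cast hd0
  change (if μ (.some x y h) = 1 then (0 : ZMod 2) else 1) = _
  have e0 : PadicInt.toZMod ((a : ℤ_[p]) - θ * (d : ℤ_[p]) ^ 2) = ((a - t * d ^ 2 : ℤ) : ZMod p) := by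
    simp [hθt]
  have e1 : PadicInt.toZMod ((a : ℤ_[p]) - θ * (d : ℤ_[p]) ^ 2) ≠ 0 := by
    rw [e0, ne_eq, ZMod.intCast_zmod_eq_zero_iff_dvd]
    exact hpa
  have e2 : ((((a : ℤ_[p]) - θ * d ^ 2 : ℤ_[p])) : ℚ_[p]) = ((x : ℚ_[p]) - θ) * (d * d) := by
    rw [hx]; push_cast; field_simp
  have e3 : χ ((x : ℚ_[p]) - θ) = quadraticChar (ZMod p) ((a - t * d ^ 2 : ℤ) : ZMod p) := by
    rw [← e0, ← hz _ e1, e2, hm _ _ (hne _) (mul_ne_zero hdp hdp), hsq _ hdp, mul_one]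
  rw [μs x y h, e3]
  rw [e0] at e1
  congr 1
  rw [quadraticChar_one_iff_isSquare e1, ZMod.euler_criterion p e1, ← ZMod.intCast_zmod_eq_zero_iff_dvd]
  push_cast
  rw [sub_eq_zero]

lemma indep_of {G : Type*} [AddCommGroup G] {n : ℕ} (h2 : ∀ g : G, g + g = 0 → g = 0)
    (P : Fin n → G) (ν : Fin n → G →+ ZMod 2) (W : Fin n → Fin n → ZMod 2)
    (hW : ∀ i i', ∑ j, W i j * ν j (P i') = if i = i' then 1 else 0) :
    ∀ (N : ℕ) (m : Fin n → ℤ), ∑ i, (m i).natAbs ≤ N → ∑ i, m i • P i = 0 → m = 0 := by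
  intro N
  induction N using Nat.strong_induction_on with
  | _ N ih =>
    intro m hm hs
    by_contra hm0
    have hev : ∀ i, (2 : ℤ) ∣ m i := by
      intro i
      have h1 : ∀ j, ∑ i', (m i' : ZMod 2) * ν j (P i') = 0 := by
        intro j
        have := congrArg (ν j) hs
        simpa [map_sum, map_zsmul] using this
      have h3 : ∑ j, W i j * ∑ i', (m i' : ZMod 2) * ν j (P i') = 0 := by simp [h1]
      have h4 : ∑ j, W i j * ∑ i', (m i' : ZMod 2) * ν j (P i') = (m i : ZMod 2) := by
        calc _ = ∑ i', (m i' : ZMod 2) * ∑ j, W i j * ν j (P i') := by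
              simp_rw [Finset.mul_sum]
              rw [Finset.sum_comm]
              refine Finset.sum_congr rfl fun _ _ => Finset.sum_congr rfl fun _ _ => ?_
              ring
          _ = _ := by simp [hW]
      rw [h4] at h3
      exact (ZMod.intCast_zmod_eq_zero_iff_dvd _ 2).1 h3
    choose m' hm' using hev
    have hs' : ∑ i, m' i • P i = 0 := by
      apply h2
      rw [← hs, ← Finset.sum_add_distrib]
      refine Finset.sum_congr rfl fun i _ => ?_
      rw [hm', ← add_zsmul]
      congr 1; ring
    have hlt : ∑ i, (m' i).natAbs < ∑ i, (m i).natAbs := by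
      have e : ∑ i, (m i).natAbs = 2 * ∑ i, (m' i).natAbs := by
        rw [Finset.mul_sum]
        refine Finset.sum_congr rfl fun i _ => ?_
        rw [hm', Int.natAbs_mul]; rfl
      have pos : 0 < ∑ i, (m i).natAbs := by
        rw [Nat.pos_iff_ne_zero]
        intro h0
        apply hm0
        funext i
        have := (Finset.sum_eq_zero_iff.1 h0) i (Finset.mem_univ i)
        simpa using this
      omega
    have := ih _ (lt_of_lt_of_le hlt hm) m' le_rfl hs'
    apply hm0
    funext i
    rw [hm', this]; simp

lemma EC_no_two {k : ℤ} (hk : ∀ x : ℚ, x ^ 3 ≠ - (k : ℚ)) (g : (EC k).Point) (hg : g + g = 0) :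
    g = 0 := by
  rcases g with _ | ⟨x, y, h⟩
  · rfl
  · exfalso
    rcases EC_add h h with ⟨-, hy, -⟩ | ⟨l, x₃, y₃, H3, hs, -⟩
    · have hy0 : y = 0 := by linarith
      have := EC_eq h
      rw [hy0] at this
      exact hk x (by linarith)
    · rw [hs] at hg
      exact WeierstrassCurve.Affine.Point.some_ne_zero H3 hg

lemma not_cube {k L : ℤ} (h1 : L ^ 3 < k) (h2 : k < (L + 1) ^ 3) (x : ℚ) : x ^ 3 ≠ - (k : ℚ) := by
  intro h
  have hd : (-x) ^ 3 = (k : ℚ) := by rw [← neg_eq_iff_eq_neg.2 h]; ring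
  have hint : IsIntegral ℤ (-x) := by
    refine ⟨Polynomial.X ^ 3 - Polynomial.C k, Polynomial.monic_X_pow_sub_C k (by norm_num), ?_⟩
    rw [Polynomial.eval₂_sub, Polynomial.eval₂_pow, Polynomial.eval₂_X, Polynomial.eval₂_C, hd]
    simp
  obtain ⟨n, hn⟩ := IsIntegrallyClosed.isIntegral_iff.1 hint
  have hn' : (n : ℚ) = -x := by simpa using hn
  rw [← hn'] at hd
  have hn3 : n ^ 3 = k := by exact_mod_cast hd
  rw [← hn3] at h1 h2
  have a1 : L < n := (Odd.strictMono_pow (by decide : Odd 3)).lt_iff_lt.1 h1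
  have a2 : n < L + 1 := (Odd.strictMono_pow (by decide : Odd 3)).lt_iff_lt.1 h2
  omega
end

section
def k0 : ℤ := 24537619889008718205152851658505801
def ptA : Fin 17 → ℤ := ![-287518001660, -249954149276, -231387235676, -218829008658, -153863915480, -12083686365, 179588218407, 194693247690, 481938369495, 527526224524, 639659255710, 660796972800, -2246341227016749407801077410550193, -1530258901807968151540909932577793, -1357530118686900147647970507328689, -60909606279607099433482552781489, 4070617319945848329595515761088511]
def ptD : Fin 17 → ℤ := ![1, 1, 1, 1, 1, 1, 1, 1, 1, 1, 1, 1, 111571430819, 128158333619, 131572092067, 152896213667, 197517823667]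
def ptB : Fin 17 → ℤ := ![27739572552099901, 94452185380426435, 110223114934451005, 118569576333381183, 144551131013151901, 156639252691623474, 174154202398188288, 178654854781822599, 369425010854453724, 413931980240076925, 535035640112602849, 559532270810391651, 189727099157524508911414160225111727614398178624732, 324249335200133933850317693151653567330828835856232, 353262408458886203576226446799736203277224973822140, 559894566210024352599123264425804049383353475886980, 1234700570224852384045109661596083276911765147042520]
def prP : Fin 17 → ℕ := ![37, 47, 61, 61, 83, 107, 113, 131, 137, 149, 167, 173, 179, 191, 197, 223, 223]
def prT : Fin 17 → ℤ := ![3, 10, 11, 21, 51, 43, 15, 105, 15, 2, 114, 12, 109, 38, 189, 108, 198]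
def matM : Fin 17 → Fin 17 → ZMod 2 := ![![0, 0, 1, 1, 0, 1, 1, 1, 1, 1, 0, 1, 1, 1, 0, 1, 1], ![0, 1, 1, 0, 1, 0, 0, 1, 0, 1, 1, 0, 0, 0, 0, 1, 1], ![1, 1, 0, 0, 1, 1, 1, 1, 0, 1, 1, 1, 1, 0, 1, 0, 0], ![1, 1, 0, 0, 1, 0, 1, 0, 0, 1, 1, 0, 1, 0, 0, 1, 0], ![1, 0, 0, 1, 1, 1, 1, 0, 0, 0, 1, 1, 0, 1, 1, 0, 1], ![0, 1, 1, 1, 0, 0, 0, 0, 1, 1, 0, 1, 0, 1, 1, 0, 0], ![0, 1, 0, 1, 0, 1, 1, 0, 1, 0, 1, 1, 0, 1, 0, 0, 0], ![0, 0, 1, 1, 1, 1, 1, 0, 1, 1, 0, 1, 0, 0, 1, 0, 1], ![1, 0, 0, 0, 1, 0, 0, 1, 1, 0, 0, 1, 0, 1, 0, 0, 1], ![0, 0, 0, 0, 1, 0, 0, 0, 1, 1, 1, 1, 0, 1, 1, 0, 0], ![1, 0, 0, 1, 1, 1, 1, 0, 0, 0, 0, 1, 0, 0, 1, 1, 1],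 ![1, 1, 1, 1, 0, 0, 1, 0, 0, 0, 0, 0, 0, 0, 1, 1, 1], ![1, 1, 1, 1, 1, 0, 1, 1, 1, 0, 0, 0, 1, 0, 0, 1, 1], ![0, 1, 1, 1, 1, 1, 1, 0, 0, 1, 1, 1, 1, 1, 0, 0, 1], ![0, 1, 1, 0, 0, 1, 0, 1, 1, 1, 1, 0, 1, 0, 1, 1, 0], ![0, 1, 1, 0, 1, 0, 1, 0, 1, 0, 0, 1, 0, 1, 1, 0, 0], ![0, 0, 0, 0, 0, 1, 1, 1, 1, 0, 1, 1, 1, 1, 1, 0, 0]]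
def matW : Fin 17 → Fin 17 → ZMod 2 := ![![0, 0, 0, 0, 1, 1, 1, 1, 0, 0, 1, 1, 0, 0, 0, 1, 0], ![0, 0, 0, 1, 0, 0, 1, 1, 1, 1, 1, 1, 0, 0, 1, 1, 0], ![1, 0, 0, 0, 1, 1, 1, 1, 0, 1, 1, 0, 0, 0, 0, 0, 1], ![0, 0, 1, 0, 1, 1, 0, 1, 0, 1, 0, 0, 0, 0, 0, 0, 1], ![0, 0, 1, 1, 0, 1, 1, 1, 0, 0, 0, 1, 1, 1, 1, 0, 1], ![1, 0, 1, 0, 0, 0, 1, 1, 1, 1, 0, 1, 1, 1, 1, 0, 1], ![1, 1, 0, 0, 0, 1, 1, 0, 1, 0, 0, 0, 1, 0, 1, 1, 1], ![0, 1, 1, 1, 1, 1, 1, 1, 1, 1, 0, 0, 0, 0, 0, 1, 0], ![0, 0, 0, 0, 1, 0, 1, 1, 1, 0, 1, 1, 0, 1, 0, 1, 1], ![1, 1, 0, 1, 1, 0, 0, 0, 1, 1, 0, 1, 0, 1, 0, 0, 1], ![1, 0, 0, 0, 0, 0, 1, 0, 1, 0, 0, 0, 1, 1, 0, 1, 1],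 ![0, 0, 0, 0, 1, 0, 0, 0, 0, 1, 1, 0, 0, 0, 1, 1, 1], ![1, 1, 1, 1, 0, 1, 0, 1, 0, 0, 0, 1, 1, 1, 1, 0, 1], ![1, 1, 0, 1, 1, 0, 0, 0, 1, 0, 1, 1, 1, 1, 0, 1, 0], ![1, 0, 1, 1, 0, 1, 1, 0, 0, 1, 1, 0, 1, 1, 0, 0, 1], ![0, 1, 0, 1, 0, 0, 1, 0, 0, 0, 0, 1, 0, 0, 0, 0, 1], ![1, 0, 0, 1, 1, 1, 0, 0, 0, 0, 0, 0, 0, 1, 0, 1, 1]]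

lemma pr_prime : ∀ j, (prP j).Prime := by
  intro j
  fin_cases j <;> norm_num [prP]

lemma pt_eq : ∀ i, ptB i ^ 2 = ptA i ^ 3 + k0 * ptD i ^ 6 := by decide +kernel

lemma pr_ok : ∀ j, (prP j : ℤ) ∣ prT j ^ 3 + k0 ∧ ¬ (prP j : ℤ) ∣ 3 * prT j ^ 2 := by decide +kernel

lemma pt_ok : ∀ i, ptD i ≠ 0 := by decide +kernel

lemma mat_ok : ∀ j i, ¬ (prP j : ℤ) ∣ ptD i ∧ ¬ (prP j : ℤ) ∣ ptA i - prT j * ptD i ^ 2 ∧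
    (if (prP j : ℤ) ∣ (ptA i - prT j * ptD i ^ 2) ^ (prP j / 2) - 1 then (0 : ZMod 2) else 1) = matM j i := by
  decide +kernel

lemma mat_inv : ∀ i i', ∑ j, matW i j * matM j i' = if i = i' then 1 else 0 := by decide +kernel

lemma k0_cube : ∀ x : ℚ, x ^ 3 ≠ - (k0 : ℚ) :=
  not_cube (L := 290587867712) (by norm_num [k0]) (by norm_num [k0])

lemma k0_pos : 0 < k0 := by norm_num [k0]

lemma pt_nonsing (i : Fin 17) : (EC k0).Nonsingular (ptA i / ptD i ^ 2 : ℚ) (ptB i / ptD i ^ 3 : ℚ) := by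
  apply EC_nonsing k0_pos.ne'
  have hd : (ptD i : ℚ) ≠ 0 := by exact_mod_cast pt_ok i
  have he : (ptB i : ℚ) ^ 2 = ptA i ^ 3 + k0 * ptD i ^ 6 := by exact_mod_cast pt_eq i
  field_simp
  linear_combination he

def pt (i : Fin 17) : (EC k0).Point := .some _ _ (pt_nonsing i)

lemma pt_HRep (i : Fin 17) : ∃ H : ℤ, 1 ≤ H ∧ HRep k0 H (pt i) := by
  refine ⟨|ptA i| + |ptD i| + 1, by linarith [abs_nonneg (ptA i), abs_nonneg (ptD i)], ptA i, ptB i, ptD i, pt_ok i, rfl, rfl, ?_, ?_⟩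
  · have h1 := abs_nonneg (ptA i)
    have h2 := abs_nonneg (ptD i)
    nlinarith
  · have h1 := abs_nonneg (ptA i)
    linarith

lemma pt_inj : Function.Injective (fun n : Fin 17 → ℕ => ∑ i, n i • pt i) := by
  have hν : ∀ j, ∃ ν : (EC k0).Point →+ ZMod 2, ∀ i, ν (pt i) = matM j i := by
    intro j
    have : Fact (prP j).Prime := ⟨pr_prime j⟩
    obtain ⟨ν, hν⟩ := exists_nu (prP j) k0 (prT j) (pr_ok j).1 (pr_ok j).2 k0_cube
    refine ⟨ν, fun i => ?_⟩
    rw [← (mat_ok j i).2.2]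
    exact hν (ptA i) (ptD i) _ _ (pt_nonsing i) rfl (mat_ok j i).1 (mat_ok j i).2.1
  choose ν hν using hν
  intro m n hmn
  have hmn' : ∑ i, m i • pt i = ∑ i, n i • pt i := hmn
  have := indep_of (EC_no_two k0_cube) pt ν matW (by
    intro i i'
    simp only [hν]
    exact mat_inv i i') _ (fun i => (m i : ℤ) - n i) le_rfl (by
      simp only [sub_smul, natCast_zsmul, Finset.sum_sub_distrib]
      rw [hmn', sub_self])
  funext i
  have h := congrFun this i
  simp only [Pi.zero_apply] at h
  omega
end

section
lemma fact3 : Fact (Nat.Prime 3) := ⟨Nat.prime_three⟩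

lemma exists_ej (j : ℕ) (c : ℤ) : haveI := fact3; ∃ e : ℤ_[3], (j.factorial : ℤ_[3]) * e = 3 ^ j * c ∧
    ∀ s, 2 * s ≤ j → (3 : ℤ_[3]) ^ s ∣ e := by
  have := fact3
  obtain ⟨v, u, hu, hv⟩ := Nat.exists_eq_pow_mul_and_not_dvd (Nat.factorial_ne_zero j) 3 (by norm_num)
  have hv2 : 2 * v ≤ j := by
    have h := sub_one_mul_padicValNat_factorial (p := 3) j
    have h3 : padicValNat 3 j.factorial = v := by
      rw [hv, padicValNat.mul (by norm_num) (by rintro rfl; simp at hu), padicValNat.prime_pow,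
        padicValNat.eq_zero_of_not_dvd hu, add_zero]
    rw [h3] at h
    omega
  have hun : IsUnit (u : ℤ_[3]) := by
    rw [PadicInt.isUnit_iff]
    have h := (PadicInt.norm_int_lt_one_iff_dvd (p := 3) (u : ℤ)).not.2 (by exact_mod_cast hu)
    push_cast at h
    exact le_antisymm (PadicInt.norm_le_one _) (not_lt.1 h)
  obtain ⟨w, hw⟩ := hun.exists_right_inv
  refine ⟨3 ^ (j - v) * c * w, ?_, ?_⟩
  · rw [hv]
    push_cast
    have : (3 : ℤ_[3]) ^ j = 3 ^ v * 3 ^ (j - v) := by rw [← pow_add]; congr 1; omega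
    rw [this]
    linear_combination (3 ^ v * 3 ^ (j - v) * c : ℤ_[3]) * hw
  · intro s hs
    exact Dvd.dvd.mul_right (Dvd.dvd.mul_right (pow_dvd_pow _ (by omega)) _) _

open Polynomial in
lemma sml (c : ℕ → ℤ) (f : ℕ → ℤ) (hf : ∀ m, f m = ∑ j ∈ Finset.range (m + 1), (m.choose j : ℤ) * 3 ^ j * c j)
    (hinf : {m | f m = 0}.Infinite) (m : ℕ) : f m = 0 := by
  have := fact3
  choose e he1 he2 using fun j => exists_ej j (c j)
  suffices h : ∀ s : ℕ, (3 : ℤ) ^ s ∣ f m by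
    by_contra h0
    obtain ⟨s, hs⟩ := pow_unbounded_of_one_lt (R := ℤ) (|f m|) (by norm_num : (1 : ℤ) < 3)
    have := Int.le_of_dvd (abs_pos.2 h0) ((dvd_abs _ _).2 (h s))
    omega
  intro s
  suffices h : (3 : ℤ_[3]) ^ s ∣ ((f m : ℤ) : ℤ_[3]) by
    have := (PadicInt.pow_p_dvd_int_iff (p := 3) s (f m)).1 (by exact_mod_cast h)
    exact_mod_cast this
  obtain ⟨S, hS, hcard⟩ := hinf.exists_subset_card_eq (2 * s)
  obtain ⟨L, hLm, hLS, hLs⟩ : ∃ L : ℕ, m ≤ L ∧ (∀ a ∈ S, a ≤ L) ∧ 2 * s ≤ L + 1 :=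
    ⟨m + S.sup id + 2 * s, by omega, fun a ha => by
      have : a ≤ S.sup id := Finset.le_sup (f := id) ha
      omega, by omega⟩
  choose! g hg using fun j (hj : 2 * s ≤ j) => he2 j s hj
  set P : ℤ_[3][X] := ∑ j ∈ Finset.range (L + 1), C (e j) * descPochhammer ℤ_[3] j with hP
  set Pl : ℤ_[3][X] := ∑ j ∈ Finset.range (2 * s), C (e j) * descPochhammer ℤ_[3] j with hPl
  set Ph : ℤ_[3][X] := ∑ j ∈ Finset.Ico (2 * s) (L + 1), C (g j) * descPochhammer ℤ_[3] j with hPh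
  have hsplit : P = Pl + (3 ^ s : ℤ_[3]) • Ph := by
    rw [hP, ← Finset.sum_range_add_sum_Ico _ hLs]
    congr 1
    rw [hPh, Finset.smul_sum]
    refine Finset.sum_congr rfl fun j hj => ?_
    rw [hg j (Finset.mem_Ico.1 hj).1, smul_eq_C_mul, C_mul, mul_assoc]
  have heval : ∀ n ≤ L, P.eval (n : ℤ_[3]) = ((f n : ℤ) : ℤ_[3]) := by
    intro n hn
    rw [hP, hf, eval_finsetSum]
    push_cast
    rw [← Finset.sum_subset (Finset.range_mono (by omega : n + 1 ≤ L + 1))]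
    · refine Finset.sum_congr rfl fun j _ => ?_
      rw [eval_mul, eval_C, descPochhammer_eval_eq_descFactorial, Nat.descFactorial_eq_factorial_mul_choose]
      push_cast
      linear_combination (n.choose j : ℤ_[3]) * he1 j
    · intro j _ hj
      rw [eval_mul, eval_C, descPochhammer_eval_eq_descFactorial, Nat.descFactorial_of_lt]
      · simp
      · simp at hj; omega
  set T : Multiset ℤ_[3] := S.val.map (fun n : ℕ => (n : ℤ_[3])) with hT
  have hTn : T.Nodup := S.nodup.map (fun a b h => by exact_mod_cast h)
  set Q : ℤ_[3][X] := (T.map (fun a => X - C a)).prod with hQ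
  have hQm : Q.Monic := monic_multiset_prod_of_monic _ _ (fun a _ => monic_X_sub_C a)
  have hQd : Q.natDegree = 2 * s := by
    rw [hQ, natDegree_multiset_prod_X_sub_C_eq_card, hT, Multiset.card_map]; exact hcard
  have hdvd : Q ∣ P := by
    by_cases hP0 : P = 0
    · rw [hP0]; exact dvd_zero _
    · rw [hQ, Multiset.prod_X_sub_C_dvd_iff_le_roots hP0, Multiset.le_iff_subset hTn]
      intro a ha
      obtain ⟨n, hn, rfl⟩ := Multiset.mem_map.1 ha
      rw [mem_roots hP0, IsRoot, heval n (hLS n hn)]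
      have : f n = 0 := hS hn
      simp [this]
  have hmod : P %ₘ Q = 0 := (modByMonic_eq_zero_iff_dvd hQm).2 hdvd
  have hPlm : Pl %ₘ Q = Pl := by
    rw [modByMonic_eq_self_iff hQm, degree_eq_natDegree hQm.ne_zero, hQd, hPl]
    refine lt_of_le_of_lt (degree_sum_le _ _) ?_
    rw [Finset.sup_lt_iff (by exact WithBot.bot_lt_coe _)]
    intro j hj
    rw [← smul_eq_C_mul]
    refine lt_of_le_of_lt (degree_smul_le _ _) ?_
    refine lt_of_le_of_lt degree_le_natDegree ?_
    rw [descPochhammer_natDegree]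
    exact_mod_cast Finset.mem_range.1 hj
  rw [hsplit, add_modByMonic, smul_modByMonic, hPlm] at hmod
  have hfin : P = (3 ^ s : ℤ_[3]) • (Ph - Ph %ₘ Q) := by
    rw [hsplit, smul_sub, eq_neg_of_add_eq_zero_left hmod]; ring
  rw [← heval m hLm, hfin, eval_smul, smul_eq_mul]
  exact dvd_mul_right _ _
end

section
open NumberField

lemma exists_denom {K : Type*} [Field K] [NumberField K] (ℓ : K →ₗ[ℚ] ℚ) :
    ∃ d : ℤ, d ≠ 0 ∧ ∀ x : 𝓞 K, ∃ n : ℤ, (d : ℚ) * ℓ (x : K) = n := by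
  classical
  obtain ⟨S, hS⟩ := (Module.Finite.fg_top : (⊤ : Submodule ℤ (𝓞 K)).FG)
  obtain ⟨b, hb⟩ := IsLocalization.exist_integer_multiples_of_finset (nonZeroDivisors ℤ) (S := ℚ)
    (S.image (fun x : 𝓞 K => ℓ (x : K)))
  refine ⟨b, nonZeroDivisors.coe_ne_zero b, fun x => ?_⟩
  have hx : x ∈ Submodule.span ℤ (S : Set (𝓞 K)) := by rw [hS]; trivial
  induction hx using Submodule.span_induction with
  | mem x h =>
    obtain ⟨n, hn⟩ := hb _ (Finset.mem_image_of_mem _ h)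
    refine ⟨n, ?_⟩
    rw [Algebra.smul_def] at hn
    simpa using hn.symm
  | zero => exact ⟨0, by simp⟩
  | add x y _ _ hx hy =>
    obtain ⟨n, hn⟩ := hx
    obtain ⟨m, hm⟩ := hy
    refine ⟨n + m, ?_⟩
    push_cast
    rw [← hn, ← hm, map_add, mul_add]
  | smul a x _ hx =>
    obtain ⟨n, hn⟩ := hx
    refine ⟨a * n, ?_⟩
    have : ((a • x : 𝓞 K) : K) = (a : ℚ) • (x : K) := by
      rw [zsmul_eq_mul, Algebra.smul_def]; push_cast; simp
    rw [this, map_smul, smul_eq_mul]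
    push_cast
    rw [← hn]; ring

lemma units_progression {K : Type*} [Field K] [NumberField K] (hpr : (Module.finrank ℚ K).Prime)
    (ℓ : K →ₗ[ℚ] ℚ) (hℓ : ℓ ≠ 0) (w η : (𝓞 K)ˣ) (β : 𝓞 K) (hη : (η : 𝓞 K) = 1 + 3 * β) :
    {u : (𝓞 K)ˣ | ℓ ((u : 𝓞 K) : K) = 0 ∧ ∃ m : ℕ, u = w * η ^ m}.Finite := by
  by_cases hη2 : η ^ 2 = 1
  · apply Set.Finite.subset (Set.toFinite {w, w * η})
    rintro u ⟨-, m, rfl⟩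
    obtain ⟨j, rfl | rfl⟩ := Nat.even_or_odd' m
    · left; rw [pow_mul, hη2, one_pow, mul_one]
    · right; simp [pow_succ, pow_mul, hη2]
  by_contra hinf
  obtain ⟨d, hd0, hd⟩ := exists_denom ℓ
  choose c hc using fun j : ℕ => hd (w * β ^ j)
  choose f hf using fun m : ℕ => hd (w * η ^ m)
  have hd0' : (d : ℚ) ≠ 0 := by exact_mod_cast hd0
  have hfs : ∀ m, f m = ∑ j ∈ Finset.range (m + 1), (m.choose j : ℤ) * 3 ^ j * c j := by
    intro m
    have : (f m : ℚ) = ((∑ j ∈ Finset.range (m + 1), (m.choose j : ℤ) * 3 ^ j * c j : ℤ) : ℚ) := by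
      have hcast : (((w : 𝓞 K) * (1 + 3 * β) ^ m : 𝓞 K) : K) = ((w : 𝓞 K) : K) * (1 + 3 * (β : K)) ^ m := by
        simp only [map_mul, map_pow, map_add, map_one, map_ofNat]
      rw [← hf, hη, hcast]
      push_cast
      have e : ((w : 𝓞 K) : K) * (1 + 3 * (β : K)) ^ m =
          ∑ j ∈ Finset.range (m + 1), ((m.choose j : ℚ) * 3 ^ j) • (((w : 𝓞 K) : K) * (β : K) ^ j) := by
        rw [add_comm, add_pow, Finset.mul_sum]
        refine Finset.sum_congr rfl fun j _ => ?_
        rw [Algebra.smul_def]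
        simp
        ring
      rw [e, map_sum, Finset.mul_sum]
      refine Finset.sum_congr rfl fun j _ => ?_
      rw [← hc, map_smul, smul_eq_mul]
      push_cast
      ring
    exact_mod_cast this
  have hZ : {m | f m = 0}.Infinite := by
    intro hfin
    apply hinf
    apply (hfin.image (fun m : ℕ => w * η ^ m)).subset
    rintro u ⟨hu, m, rfl⟩
    refine ⟨m, ?_, rfl⟩
    change f m = 0
    have := hf m
    have e : ((((w * η ^ m : (𝓞 K)ˣ)) : 𝓞 K) : K) = (((w : 𝓞 K) * (η : 𝓞 K) ^ m : 𝓞 K) : K) := by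
      push_cast; rfl
    rw [e] at hu
    rw [hu, mul_zero] at this
    exact_mod_cast this.symm
  have hall : ∀ m : ℕ, ℓ (((w : 𝓞 K) : K) * ((η : 𝓞 K) : K) ^ m) = 0 := by
    intro m
    have h1 := hf m
    rw [sml c f hfs hZ m] at h1
    have h2 := (mul_eq_zero.1 (h1.trans Int.cast_zero)).resolve_left hd0'
    simpa using h2
  have hnq : ((η : 𝓞 K) : K) ∉ (⊥ : IntermediateField ℚ K) := by
    rw [IntermediateField.mem_bot]
    rintro ⟨q, hq⟩
    have h1 := NumberField.isUnit_iff_norm.1 η.isUnit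
    rw [RingOfIntegers.coe_norm, ← hq, Algebra.norm_algebraMap, abs_pow] at h1
    have h2 : |q| = 1 := (pow_eq_one_iff_of_nonneg (abs_nonneg q) hpr.ne_zero).1 h1
    apply hη2
    apply Units.ext
    apply RingOfIntegers.ext
    have h3 : ((η : 𝓞 K) : K) ^ 2 = 1 := by
      rw [← hq, ← map_pow, ← sq_abs, h2]; simp
    push_cast
    exact h3
  have htop : IntermediateField.adjoin ℚ {((η : 𝓞 K) : K)} = ⊤ := by
    have := IntermediateField.isSimpleOrder_of_finrank_prime ℚ K hpr
    rcases eq_bot_or_eq_top (IntermediateField.adjoin ℚ {((η : 𝓞 K) : K)}) with h | h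
    · exact absurd (IntermediateField.adjoin_simple_eq_bot_iff.1 h) hnq
    · exact h
  have hall2 : ∀ x : K, ℓ (((w : 𝓞 K) : K) * x) = 0 := by
    intro x
    have hx : x ∈ (IntermediateField.adjoin ℚ {((η : 𝓞 K) : K)}).toSubalgebra := by rw [htop]; trivial
    rw [IntermediateField.adjoin_simple_toSubalgebra_of_isAlgebraic (Algebra.IsAlgebraic.isAlgebraic _),
      Algebra.adjoin_singleton_eq_range_aeval] at hx
    obtain ⟨g, rfl⟩ := hx
    change ℓ (_ * Polynomial.aeval _ g) = 0
    rw [Polynomial.aeval_eq_sum_range, Finset.mul_sum, map_sum]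
    refine Finset.sum_eq_zero fun i _ => ?_
    rw [mul_smul_comm, map_smul, hall, smul_zero]
  apply hℓ
  ext x
  have hw : ((w : 𝓞 K) : K) ≠ 0 := by simp
  have := hall2 (((w : 𝓞 K) : K)⁻¹ * x)
  rwa [mul_inv_cancel_left₀ hw] at this

lemma units_hyperplane {K : Type*} [Field K] [NumberField K] (hpr : (Module.finrank ℚ K).Prime)
    (hrank : Units.rank K = 1) (ℓ : K →ₗ[ℚ] ℚ) (hℓ : ℓ ≠ 0) :
    {u : (𝓞 K)ˣ | ℓ ((u : 𝓞 K) : K) = 0}.Finite := by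
  obtain ⟨N, hN, hpow⟩ : ∃ N : ℕ, 0 < N ∧ ∀ η : (𝓞 K)ˣ, ∃ β : 𝓞 K, ((η ^ N : (𝓞 K)ˣ) : 𝓞 K) = 1 + 3 * β := by
    have hne : (Ideal.span {(3 : 𝓞 K)}) ≠ ⊥ := by simp
    have := Ideal.finiteQuotientOfFreeOfNeBot _ hne
    refine ⟨Nat.card (𝓞 K ⧸ Ideal.span {(3 : 𝓞 K)})ˣ, Nat.card_pos, fun η => ?_⟩
    set N := Nat.card (𝓞 K ⧸ Ideal.span {(3 : 𝓞 K)})ˣ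
    have h1 : (Units.map (Ideal.Quotient.mk (Ideal.span {(3 : 𝓞 K)})).toMonoidHom η) ^ N = 1 := pow_card_eq_one'
    have h2 : Ideal.Quotient.mk (Ideal.span {(3 : 𝓞 K)}) ((η : 𝓞 K) ^ N) = Ideal.Quotient.mk _ 1 := by
      have := congrArg Units.val h1
      simpa using this
    rw [Ideal.Quotient.eq, Ideal.mem_span_singleton] at h2
    obtain ⟨β, hβ⟩ := h2
    refine ⟨β, ?_⟩
    push_cast
    linear_combination hβ
  let i0 : Fin (Units.rank K) := ⟨0, by omega⟩
  set ε := Units.fundSystem K i0 with hε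
  have hrep : ∀ u : (𝓞 K)ˣ, ∃ (ζ : Units.torsion K) (n : ℤ), u = ζ * ε ^ n := by
    intro u
    obtain ⟨⟨ζ, e⟩, h, -⟩ := Units.exist_unique_eq_mul_prod K u
    have : Subsingleton (Fin (Units.rank K)) := by rw [hrank]; infer_instance
    refine ⟨ζ, e i0, ?_⟩
    rw [Fintype.prod_subsingleton _ i0] at h
    exact h
  have hfin : (⋃ t : Units.torsion K × Bool × Fin N, {u : (𝓞 K)ˣ | ℓ ((u : 𝓞 K) : K) = 0 ∧
      ∃ m : ℕ, u = ((t.1 : (𝓞 K)ˣ) * (bif t.2.1 then ε else ε⁻¹) ^ (t.2.2 : ℕ)) *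
        ((bif t.2.1 then ε else ε⁻¹) ^ N) ^ m}).Finite := by
    apply Set.finite_iUnion
    intro t
    obtain ⟨β, hβ⟩ := hpow (bif t.2.1 then ε else ε⁻¹)
    exact units_progression hpr ℓ hℓ _ _ β hβ
  apply hfin.subset
  intro u hu
  obtain ⟨ζ, n, rfl⟩ := hrep u
  rw [Set.mem_iUnion]
  obtain ⟨b, k, hk⟩ : ∃ (b : Bool) (k : ℕ), ε ^ n = (bif b then ε else ε⁻¹) ^ k := by
    obtain ⟨k, rfl | rfl⟩ := n.eq_nat_or_neg
    · exact ⟨true, k, by simp⟩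
    · exact ⟨false, k, by simp⟩
  refine ⟨⟨ζ, b, ⟨k % N, Nat.mod_lt _ hN⟩⟩, hu, k / N, ?_⟩
  simp only
  rw [hk, mul_assoc, ← pow_mul, ← pow_add, Nat.mod_add_div]
end

section
open NumberField

lemma nonreal_root (b c : ℝ) (h : 0 < 4 * b ^ 3 + 27 * c ^ 2) :
    ∃ z : ℂ, 0 < z.im ∧ z ^ 3 + b * z + c = 0 := by
  obtain ⟨r, hr⟩ : ∃ r : ℝ, r ^ 3 + b * r + c = 0 := by
    set R := 1 + |b| + |c| with hR
    have hb := abs_nonneg b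
    have hc := abs_nonneg c
    have b1 := neg_abs_le b
    have b2 := le_abs_self b
    have c1 := neg_abs_le c
    have c2 := le_abs_self c
    have hR1 : 1 ≤ R := by linarith
    have hR3 : R + |b| * R + |c| * R ≤ R ^ 3 := by
      have : R ^ 2 = R + |b| * R + |c| * R := by rw [sq]; nth_rewrite 1 [hR]; ring
      rw [← this]
      exact pow_le_pow_right₀ hR1 (by norm_num)
    have hcR : |c| ≤ |c| * R := le_mul_of_one_le_right hc hR1
    have hbR1 : -(|b| * R) ≤ b * R := by nlinarith
    have hbR2 : b * R ≤ |b| * R := by nlinarith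
    have hcont : ContinuousOn (fun x : ℝ => x ^ 3 + b * x + c) (Set.Icc (-R) R) := by fun_prop
    have := intermediate_value_Icc (by linarith : -R ≤ R) hcont
    obtain ⟨r, -, hr⟩ := this (show (0 : ℝ) ∈ Set.Icc _ _ from ⟨by ring_nf; ring_nf at hR3 hcR hbR1 hbR2; linarith, by linarith⟩)
    exact ⟨r, hr⟩
  have hpos : 0 < 3 * r ^ 2 + 4 * b := by
    by_contra hn
    have e : (3 * r ^ 2 + 4 * b) * (3 * r ^ 2 + b) ^ 2 = 4 * b ^ 3 + 27 * c ^ 2 := by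
      have : c = - r ^ 3 - b * r := by linarith
      rw [this]; ring
    have := mul_nonneg (by linarith : 0 ≤ -(3 * r ^ 2 + 4 * b)) (sq_nonneg (3 * r ^ 2 + b))
    linarith
  set s := Real.sqrt (3 * r ^ 2 + 4 * b) with hs
  have hs2 : s ^ 2 = 3 * r ^ 2 + 4 * b := Real.sq_sqrt hpos.le
  have hs0 : 0 < s := Real.sqrt_pos.2 hpos
  refine ⟨⟨-r / 2, s / 2⟩, by simpa using hs0, ?_⟩
  have hz : (⟨-r / 2, s / 2⟩ : ℂ) = -(r : ℂ) / 2 + s / 2 * Complex.I := by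
    apply Complex.ext <;> simp
  rw [hz]
  have hs2' : (s : ℂ) ^ 2 = 3 * r ^ 2 + 4 * b := by exact_mod_cast hs2
  have hr' : (r : ℂ) ^ 3 + b * r + c = 0 := by exact_mod_cast hr
  have hI := Complex.I_sq
  linear_combination (hr' + (-(r : ℂ) / 2 + s / 2 * Complex.I - r) * (s ^ 2 / 4 * hI - hs2' / 4))

open Polynomial in
lemma cub_eval {R S : Type*} [CommRing R] [CommRing S] (f : R →+* S) (z : S) (b c : R) :
    eval₂ f z (X ^ 3 + C b * X + C c) = z ^ 3 + f b * z + f c := by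
  simp only [eval₂_add, eval₂_mul, eval₂_pow, eval₂_X, eval₂_C]

open Polynomial in
lemma thue_finite (b c : ℤ) (hirr : Irreducible (X ^ 3 + C (b : ℚ) * X + C (c : ℚ) : ℚ[X]))
    (hdisc : 0 < 4 * b ^ 3 + 27 * c ^ 2) :
    {t : ℤ × ℤ | t.1 ^ 3 + b * t.1 * t.2 ^ 2 + c * t.2 ^ 3 = 1}.Finite := by
  set g : ℚ[X] := X ^ 3 + C (b : ℚ) * X + C (c : ℚ) with hg
  have hdeg : g.natDegree = 3 := by rw [hg]; compute_degree!
  have : Fact (Irreducible g) := ⟨hirr⟩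
  let pb := AdjoinRoot.powerBasis hirr.ne_zero
  have hdim : pb.dim = 3 := by rw [← hdeg]; rfl
  have : CharZero (AdjoinRoot g) := charZero_of_injective_algebraMap (algebraMap ℚ (AdjoinRoot g)).injective
  have : FiniteDimensional ℚ (AdjoinRoot g) := pb.finite
  have : NumberField (AdjoinRoot g) := {}
  have hfr : Module.finrank ℚ (AdjoinRoot g) = 3 := by rw [pb.finrank, hdim]
  set θ : AdjoinRoot g := AdjoinRoot.root g with hθ
  have hθeq : θ ^ 3 + b * θ + c = 0 := by
    have h1 := AdjoinRoot.eval₂_root g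
    have h2 := cub_eval (AdjoinRoot.of g) θ (b : ℚ) (c : ℚ)
    have h3 := h2.symm.trans h1
    simpa using h3
  have hrank : Units.rank (AdjoinRoot g) = 1 := by
    obtain ⟨z, hz, hz0⟩ := nonreal_root b c (by exact_mod_cast hdisc)
    let φ : AdjoinRoot g →+* ℂ := AdjoinRoot.lift (algebraMap ℚ ℂ) z (by
      rw [hg, cub_eval]; simpa using hz0)
    have hφ : φ θ = z := AdjoinRoot.lift_root _
    have hnr : ¬ ComplexEmbedding.IsReal φ := by
      intro h
      have h1 := RingHom.congr_fun h θ
      rw [ComplexEmbedding.conjugate_coe_eq, hφ] at h1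
      have := Complex.conj_eq_iff_im.1 h1
      linarith
    have hc1 : 0 < InfinitePlace.nrComplexPlaces (AdjoinRoot g) := by
      classical
      unfold InfinitePlace.nrComplexPlaces
      exact Fintype.card_pos_iff.2 ⟨⟨InfinitePlace.mk φ, ⟨φ, hnr, rfl⟩⟩⟩
    have h1 := InfinitePlace.card_add_two_mul_card_eq_rank (AdjoinRoot g)
    have h2 := InfinitePlace.card_eq_nrRealPlaces_add_nrComplexPlaces (AdjoinRoot g)
    rw [Units.rank]
    omega
  have hbas : ∀ i : Fin pb.dim, pb.basis i = θ ^ (i : ℕ) := by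
    intro i
    rw [pb.basis_eq_pow]; rfl
  have hcoord : ∀ i j : Fin pb.dim, pb.basis.coord i (θ ^ (j : ℕ)) = if j = i then 1 else 0 := by
    intro i j
    rw [← hbas, Module.Basis.coord_apply, Module.Basis.repr_self, Finsupp.single_apply]
  let i0 : Fin pb.dim := ⟨0, by omega⟩
  let i1 : Fin pb.dim := ⟨1, by omega⟩
  let i2 : Fin pb.dim := ⟨2, by omega⟩
  have hlin : ∀ (i : Fin pb.dim) (p q : ℤ), pb.basis.coord i ((p : AdjoinRoot g) - q * θ) =
      p * (if i0 = i then 1 else 0) - q * (if i1 = i then 1 else 0) := by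
    intro i p q
    have e : (p : AdjoinRoot g) - q * θ = (p : ℚ) • θ ^ (i0 : ℕ) - (q : ℚ) • θ ^ (i1 : ℕ) := by
      simp [Algebra.smul_def, i0, i1]
    rw [e, map_sub, map_smul, map_smul, hcoord, hcoord, smul_eq_mul, smul_eq_mul]
  have hfin := units_hyperplane (K := AdjoinRoot g) (by rw [hfr]; norm_num) hrank (pb.basis.coord i2) (by
    intro h
    have := hcoord i2 i2
    rw [h] at this
    simp at this)
  have hint : IsIntegral ℤ θ := by
    refine ⟨X ^ 3 + C b * X + C c, by monicity!, ?_⟩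
    rw [cub_eval]; simpa using hθeq
  let Θ : 𝓞 (AdjoinRoot g) := ⟨θ, hint⟩
  have hΘ : Θ ^ 3 + b * Θ + c = 0 := by
    apply RingOfIntegers.ext
    push_cast
    exact hθeq
  have hu : ∀ t : ℤ × ℤ, ∃ u : (𝓞 (AdjoinRoot g))ˣ, t.1 ^ 3 + b * t.1 * t.2 ^ 2 + c * t.2 ^ 3 = 1 →
      (u : 𝓞 (AdjoinRoot g)) = t.1 - t.2 * Θ := by
    rintro ⟨p, q⟩
    by_cases h : p ^ 3 + b * p * q ^ 2 + c * q ^ 3 = 1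
    · have h' : (p : 𝓞 (AdjoinRoot g)) ^ 3 + b * p * q ^ 2 + c * q ^ 3 = 1 := by exact_mod_cast h
      refine ⟨Units.mkOfMulEqOne (p - q * Θ) (p ^ 2 + p * q * Θ + q ^ 2 * Θ ^ 2 + b * q ^ 2) ?_, fun _ => rfl⟩
      linear_combination h' - (q : 𝓞 (AdjoinRoot g)) ^ 3 * hΘ
    · exact ⟨1, fun h' => absurd h' h⟩
  choose u hu using hu
  have huK : ∀ t : ℤ × ℤ, t.1 ^ 3 + b * t.1 * t.2 ^ 2 + c * t.2 ^ 3 = 1 →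
      ((u t : 𝓞 (AdjoinRoot g)) : AdjoinRoot g) = t.1 - t.2 * θ := by
    intro t ht
    rw [hu t ht]
    simp only [map_sub, map_mul, map_intCast]
    rfl
  refine Set.Finite.of_finite_image (hfin.subset ?_) (f := u) ?_
  · rintro _ ⟨t, ht, rfl⟩
    change pb.basis.coord i2 _ = 0
    rw [huK t ht, hlin]
    simp [i0, i1, i2]
  · intro t ht t' ht' h
    have e : ((t.1 : AdjoinRoot g) - t.2 * θ) = t'.1 - t'.2 * θ := by
      rw [← huK t ht, ← huK t' ht', h]
    have e0 := congrArg (pb.basis.coord i0) e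
    have e1 := congrArg (pb.basis.coord i1) e
    rw [hlin, hlin] at e0 e1
    simp [i0, i1] at e0 e1
    exact Prod.ext (by exact_mod_cast e0) (by exact_mod_cast e1)
end

section
open UpperHalfPlane ModularGroup Polynomial
open scoped MatrixGroups Modular

lemma red_real (A u v s D : ℝ) (hA : 1 ≤ A^2) (hD : 1 ≤ D) (hu : |u| ≤ 1/2) (hn : 1 ≤ u^2+v^2)
    (h : 27*D = v^2*((A*u+s)^2+A^2*v^2)^2) :
    |A| ≤ 48*D+1 ∧ |s-2*u*A| ≤ 3*(48*D+1) ∧ |A*(u^2+v^2)-2*u*s| ≤ 4*(48*D+1)^2 ∧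
      |s*(u^2+v^2)| ≤ 4*(48*D+1)^2 := by
  have hu2 : u^2 ≤ 1/4 := by
    rw [← sq_abs]; nlinarith [abs_nonneg u]
  have hv : 3/4 ≤ v^2 := by linarith
  obtain ⟨Q, hQ⟩ : ∃ Q, Q = (A*u+s)^2+A^2*v^2 := ⟨_, rfl⟩
  rw [← hQ] at h
  have hT : 0 ≤ (A*u+s)^2 := sq_nonneg _
  have hT2 : 0 ≤ A^2*v^2 := by positivity
  have hQ0 : A^2*v^2 ≤ Q := by linarith
  have hQ1 : v^2 ≤ A^2*v^2 := le_mul_of_one_le_left (by linarith) hA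
  have hQ2 : Q^2 ≤ 36*D := by
    have := mul_le_mul_of_nonneg_right hv (sq_nonneg Q)
    linarith
  have hQ3 : Q ≤ 36*D := by
    by_contra hc
    push Not at hc
    have : 1 * Q ≤ Q * Q := mul_le_mul_of_nonneg_right (by linarith) (by linarith)
    linarith [sq Q]
  have hAm2 : A^2 ≤ 48*D := by
    have := mul_le_mul_of_nonneg_left hv (sq_nonneg A)
    linarith
  have hvm : v^2 ≤ 36*D := by linarith
  have hsm2 : (A*u+s)^2 ≤ 36*D := by linarith
  obtain ⟨m, hm⟩ : ∃ m, m = 48*D+1 := ⟨_, rfl⟩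
  rw [← hm]
  have hm1 : 1 ≤ m := by linarith
  have hmm : m ≤ m^2 := by rw [sq]; exact le_mul_of_one_le_left (by linarith) hm1
  have hAm : |A| ≤ m := abs_le_of_sq_le_sq (by linarith) (by linarith)
  have h1 : |A*u+s| ≤ m := abs_le_of_sq_le_sq (by linarith) (by linarith)
  have h2 : |A*u| ≤ m*(1/2) := by
    rw [abs_mul]; exact mul_le_mul hAm hu (abs_nonneg _) (by linarith)
  have h1' := abs_le.1 h1
  have h2' := abs_le.1 h2
  have hs : |s| ≤ 3/2*m := abs_le.2 ⟨by linarith, by linarith⟩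
  have hs' := abs_le.1 hs
  have hnn : u^2+v^2 ≤ 2*m := by linarith
  have hn0 : 0 ≤ u^2+v^2 := by linarith
  have h3 : |u*s| ≤ 1/2*(3/2*m) := by
    rw [abs_mul]; exact mul_le_mul hu hs (abs_nonneg _) (by norm_num)
  have h3' := abs_le.1 h3
  have h4 : |A*(u^2+v^2)| ≤ m*(2*m) := by
    rw [abs_mul, abs_of_nonneg hn0]
    exact mul_le_mul hAm hnn hn0 (by linarith)
  have h4' := abs_le.1 h4
  have h5 : m*(2*m) = 2*m^2 := by ring
  refine ⟨hAm, abs_le.2 ⟨by linarith, by linarith⟩, abs_le.2 ⟨by linarith, by linarith⟩, ?_⟩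
  rw [abs_mul, abs_of_nonneg hn0]
  have : |s| * (u^2+v^2) ≤ (3/2*m)*(2*m) := mul_le_mul hs hnn hn0 (by linarith)
  linarith

def Repr4 (x y a b c d A B C E : ℤ) : Prop :=
  a*d-b*c=1 ∧ A = d^3-3*x*d*c^2-2*y*c^3 ∧
  B = -3*d^2*b-3*x*(-2*a*c*d-b*c^2)+6*y*a*c^2 ∧
  C = 3*d*b^2-3*x*(a^2*d+2*a*b*c)-6*y*a^2*c ∧
  E = -b^3+3*x*a^2*b+2*y*a^3

lemma reduce4 (D x y : ℤ) (hD : 0 < D) (h : y^2 = x^3 + D)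
    (hno : ∀ t : ℤ, t^3-3*x*t+2*y ≠ 0) :
    ∃ a b c d A B C E : ℤ, Repr4 x y a b c d A B C E ∧
      |A| ≤ 48*D+1 ∧ |B| ≤ 3*(48*D+1) ∧ |C| ≤ 4*(48*D+1)^2 ∧ |E| ≤ 4*(48*D+1)^2 := by
  have hyR : (y:ℝ)^2 = (x:ℝ)^3 + D := by exact_mod_cast h
  have hDR : (1:ℝ) ≤ D := by exact_mod_cast hD
  obtain ⟨z0, hz0, hz⟩ := nonreal_root (-3*x) (2*y) (by nlinarith)
  obtain ⟨g, hg⟩ := ModularGroup.exists_smul_mem_fd ⟨z0, hz0⟩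
  obtain ⟨hg1, hg2⟩ := hg
  have hdet : g 0 0 * g 1 1 - g 0 1 * g 1 0 = 1 := by
    have := g.2; rw [Matrix.det_fin_two] at this; exact this
  have hw : ((g • (⟨z0, hz0⟩ : ℍ) : ℍ):ℂ) = (g 0 0 * z0 + g 0 1)/(g 1 0 * z0 + g 1 1) := by
    rw [UpperHalfPlane.specialLinearGroup_apply]; simp
  have hwim := (g • (⟨z0, hz0⟩ : ℍ)).im_pos
  generalize hW : ((g • (⟨z0, hz0⟩ : ℍ)) : ℍ) = W at *
  generalize g 0 0 = a at *
  generalize g 0 1 = b at *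
  generalize g 1 0 = c at *
  generalize g 1 1 = d at *
  have hne : (c * z0 + d : ℂ) ≠ 0 := by
    intro h0
    have him := congrArg Complex.im h0
    simp at him
    rcases him with hc | hc
    · subst hc
      simp at h0
      subst h0
      simp at hdet
    · exact hz0.ne' hc
  set w : ℂ := (W : ℂ) with hwdef
  have hdetC : (a:ℂ)*d-b*c=1 := by exact_mod_cast hdet
  have hw' : w*(c*z0+d) = a*z0+b := by rw [hw]; exact div_mul_cancel₀ _ hne
  have e1 : ((d:ℂ)*w-b)*(c*z0+d) = z0 := by linear_combination d*hw'+z0*hdetC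
  have e2 : (-(c:ℂ)*w+a)*(c*z0+d) = 1 := by linear_combination -c*hw'+hdetC
  push_cast at hz
  have e3 : ((d:ℂ)*w-b)^3-3*x*((d:ℂ)*w-b)*(-(c:ℂ)*w+a)^2+2*y*(-(c:ℂ)*w+a)^3 = 0 := by
    have : (c*z0+d:ℂ)^3*(((d:ℂ)*w-b)^3-3*x*((d:ℂ)*w-b)*(-(c:ℂ)*w+a)^2+2*y*(-(c:ℂ)*w+a)^3) =
        (((d:ℂ)*w-b)*(c*z0+d))^3-3*x*(((d:ℂ)*w-b)*(c*z0+d))*((-(c:ℂ)*w+a)*(c*z0+d))^2+2*y*((-(c:ℂ)*w+a)*(c*z0+d))^3 := by ring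
    rw [e1, e2] at this
    have h0 : z0^3-3*x*z0*1^2+2*y*1^3 = 0 := by linear_combination hz
    rw [h0] at this
    exact (mul_eq_zero.1 this).resolve_left (pow_ne_zero 3 hne)
  obtain ⟨A, hA⟩ : ∃ A : ℤ, A = d^3-3*x*d*c^2-2*y*c^3 := ⟨_, rfl⟩
  obtain ⟨B, hB⟩ : ∃ B : ℤ, B = -3*d^2*b-3*x*(-2*a*c*d-b*c^2)+6*y*a*c^2 := ⟨_, rfl⟩
  obtain ⟨C, hC⟩ : ∃ C : ℤ, C = 3*d*b^2-3*x*(a^2*d+2*a*b*c)-6*y*a^2*c := ⟨_, rfl⟩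
  obtain ⟨E, hE⟩ : ∃ E : ℤ, E = -b^3+3*x*a^2*b+2*y*a^3 := ⟨_, rfl⟩
  have hA0 : A ≠ 0 := by
    intro h0
    have hcd : IsCoprime c d := ⟨-b, a, by linarith⟩
    have hdv : c ∣ d^3 := ⟨3*x*d*c+2*y*c^2, by linear_combination h0 - hA⟩
    have hcu : IsUnit c := (hcd.pow_right (n := 3)).isUnit_of_dvd' dvd_rfl hdv
    rcases Int.isUnit_iff.1 hcu with hc | hc
    · subst hc; apply hno (-d); linear_combination -h0 + hA
    · subst hc; apply hno d; linear_combination h0 - hA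
  have e4 : (A:ℂ)*w^3+B*w^2+C*w+E = 0 := by
    rw [hA, hB, hC, hE]; push_cast; linear_combination e3
  set u := w.re with hu
  set v := w.im with hv
  have hwuv : w = u + v*Complex.I := (Complex.re_add_im w).symm
  have hvpos : 0 < v := hwim
  have e5 : ((A*(u^3-3*u*v^2)+B*(u^2-v^2)+C*u+E : ℝ):ℂ) + ((A*(3*u^2*v-v^3)+2*B*u*v+C*v:ℝ):ℂ)*Complex.I = 0 := by
    rw [← e4, hwuv]; push_cast
    linear_combination (-(A:ℂ)*(v^3*Complex.I+3*u*v^2)-B*v^2)*Complex.I_sq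
  have hre := congrArg Complex.re e5
  have him := congrArg Complex.im e5
  simp only [Complex.add_re, Complex.add_im, Complex.re_ofReal_mul, Complex.im_ofReal_mul, Complex.ofReal_re, Complex.ofReal_im, Complex.I_re, Complex.I_im, Complex.zero_re, Complex.zero_im, mul_zero, add_zero, zero_add, mul_one] at hre him
  have hCr : (C:ℝ) = A*(u^2+v^2)-2*u*(B+2*u*A) := by
    have : v*((C:ℝ) - (A*(u^2+v^2)-2*u*(B+2*u*A))) = 0 := by linear_combination him
    rcases mul_eq_zero.1 this with h | h
    · exact absurd h hvpos.ne'
    · linarith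
  have hEr : (E:ℝ) = (B+2*u*A)*(u^2+v^2) := by
    rw [hCr] at hre; linear_combination hre
  have hdisc : B^2*C^2-4*A*C^3-4*B^3*E-27*A^2*E^2+18*A*B*C*E = -108*D := by
    have : B^2*C^2-4*A*C^3-4*B^3*E-27*A^2*E^2+18*A*B*C*E = (108*x^3-108*y^2)*(a*d-b*c)^6 := by
      rw [hA, hB, hC, hE]; ring
    rw [this, hdet]; linear_combination -108*h
  have hdR : (B:ℝ)^2*C^2-4*A*C^3-4*B^3*E-27*A^2*E^2+18*A*B*C*E = -108*D := by exact_mod_cast hdisc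
  obtain ⟨s, hs⟩ : ∃ s : ℝ, s = B+2*u*A := ⟨_, rfl⟩
  have hBr : (B:ℝ) = s-2*u*A := by linarith
  rw [← hs] at hCr hEr
  have hfin : 27*(D:ℝ) = v^2*((A*u+s)^2+A^2*v^2)^2 := by
    rw [hBr, hCr, hEr] at hdR
    linear_combination (1/4)*hdR
  have hA1 : (1:ℝ) ≤ (A:ℝ)^2 := by
    have : 1 ≤ A^2 := by have := sq_pos_of_ne_zero hA0; omega
    exact_mod_cast this
  have hn : 1 ≤ u^2+v^2 := by
    have := hg1; rw [Complex.normSq_apply] at this; nlinarith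
  obtain ⟨r1, r2, r3, r4⟩ := red_real A u v s D hA1 hDR hg2 hn hfin
  rw [← hBr] at r2
  rw [← hCr] at r3
  rw [← hEr] at r4
  exact ⟨a,b,c,d,A,B,C,E,⟨hdet,hA,hB,hC,hE⟩, by exact_mod_cast r1, by exact_mod_cast r2, by exact_mod_cast r3, by exact_mod_cast r4⟩

lemma irr4 (x y : ℤ) (hno : ∀ t : ℤ, t^3-3*x*t+2*y ≠ 0) :
    Irreducible (X^3 + C ((-3*x : ℤ):ℚ) * X + C ((2*y : ℤ):ℚ) : ℚ[X]) := by
  have hdeg : (X^3 + C ((-3*x : ℤ):ℚ) * X + C ((2*y : ℤ):ℚ) : ℚ[X]).natDegree = 3 := by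
    compute_degree!
  rw [Polynomial.irreducible_iff_roots_eq_zero_of_degree_le_three (by rw [hdeg]; norm_num) (by rw [hdeg])]
  rw [Multiset.eq_zero_iff_forall_notMem]
  intro q hq
  have hq' := (Polynomial.mem_roots'.1 hq).2
  simp [IsRoot] at hq'
  have hint : IsIntegral ℤ q := by
    refine ⟨X^3 + C (-3*x) * X + C (2*y), by monicity!, ?_⟩
    simp only [eval₂_add, eval₂_mul, eval₂_pow, eval₂_X, eval₂_C]
    simp
    linear_combination hq'
  obtain ⟨t, ht⟩ := IsIntegrallyClosed.isIntegral_iff.1 hint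
  apply hno t
  have : q = (t:ℚ) := by rw [← ht]; simp
  rw [this] at hq'
  have : (t:ℚ)^3-3*x*t+2*y = 0 := by linear_combination hq'
  exact_mod_cast this

lemma fiber4 (D A B C E : ℤ) (hD : 0 < D) :
    {x : ℤ | ∃ y a b c d : ℤ, y^2 = x^3+D ∧ (∀ t : ℤ, t^3-3*x*t+2*y ≠ 0) ∧
      Repr4 x y a b c d A B C E}.Finite := by
  rcases Set.eq_empty_or_nonempty {x : ℤ | ∃ y a b c d : ℤ, y^2 = x^3+D ∧ (∀ t : ℤ, t^3-3*x*t+2*y ≠ 0) ∧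
      Repr4 x y a b c d A B C E} with he | ⟨x0, y0, a0, b0, c0, d0, h0, hno, hdet, hA, hB, hC, hE⟩
  · rw [he]; exact Set.finite_empty
  have ht := thue_finite (-3*x0) (2*y0) (irr4 x0 y0 hno) (by nlinarith)
  have hf : {t : ℤ × ℤ | A*t.1^3+B*t.1^2*t.2+C*t.1*t.2^2+E*t.2^3 = 1}.Finite := by
    refine Set.Finite.of_finite_image (f := fun t : ℤ×ℤ => (d0*t.1-b0*t.2, -c0*t.1+a0*t.2)) (ht.subset ?_) ?_
    · rintro _ ⟨⟨p, q⟩, hpq, rfl⟩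
      change A*p^3+B*p^2*q+C*p*q^2+E*q^3 = 1 at hpq
      change (d0*p-b0*q)^3 + (-3*x0)*(d0*p-b0*q)*(-c0*p+a0*q)^2 + (2*y0)*(-c0*p+a0*q)^3 = 1
      rw [← hpq, hA, hB, hC, hE]; ring
    · rintro ⟨p, q⟩ - ⟨p', q'⟩ - hh
      simp only [Prod.mk.injEq] at hh
      obtain ⟨h1, h2⟩ := hh
      ext
      · change p = p'
        linear_combination a0*h1+b0*h2-(p-p')*hdet
      · change q = q'
        linear_combination c0*h1+d0*h2-(q-q')*hdet
  refine (hf.image (fun t => ((B^2-3*A*C)*t.1^2+(B*C-9*A*E)*t.1*t.2+(C^2-3*B*E)*t.2^2)/9)).subset ?_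
  rintro x ⟨y, a, b, c, d, h, -, hdet, hA, hB, hC, hE⟩
  refine ⟨(a,c), ?_, ?_⟩
  · change A*a^3+B*a^2*c+C*a*c^2+E*c^3 = 1
    have : A*a^3+B*a^2*c+C*a*c^2+E*c^3 = (a*d-b*c)^3 := by rw [hA, hB, hC, hE]; ring
    rw [this, hdet]; norm_num
  · change ((B^2-3*A*C)*a^2+(B*C-9*A*E)*a*c+(C^2-3*B*E)*c^2)/9 = x
    have : (B^2-3*A*C)*a^2+(B*C-9*A*E)*a*c+(C^2-3*B*E)*c^2 = 9*x*(a*d-b*c)^4 := by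
      rw [hA, hB, hC, hE]; ring
    rw [this, hdet]; omega

lemma mordell_finite (D : ℤ) (hD : 0 < D) : {p : ℤ × ℤ | p.2^2 = p.1^3 + D}.Finite := by
  have hx : {x : ℤ | ∃ y : ℤ, y^2 = x^3 + D}.Finite := by
    have hcover : {x : ℤ | ∃ y : ℤ, y^2 = x^3 + D} ⊆
        Set.Icc (-(8*D)) (8*D) ∪ ⋃ t ∈ (Set.Icc (-(48*D+1)) (48*D+1) ×ˢ (Set.Icc (-(3*(48*D+1))) (3*(48*D+1)) ×ˢ
          (Set.Icc (-(4*(48*D+1)^2)) (4*(48*D+1)^2) ×ˢ Set.Icc (-(4*(48*D+1)^2)) (4*(48*D+1)^2))) : Set (ℤ×ℤ×ℤ×ℤ)),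
        {x : ℤ | ∃ y a b c d : ℤ, y^2 = x^3+D ∧ (∀ t : ℤ, t^3-3*x*t+2*y ≠ 0) ∧
          Repr4 x y a b c d t.1 t.2.1 t.2.2.1 t.2.2.2} := by
      rintro x ⟨y, hy⟩
      by_cases hno : ∀ t : ℤ, t^3-3*x*t+2*y ≠ 0
      · right
        obtain ⟨a,b,c,d,A,B,C,E,hR,h1,h2,h3,h4⟩ := reduce4 D x y hD hy hno
        refine Set.mem_biUnion (x := (A,B,C,E)) ?_ ⟨y,a,b,c,d,hy,hno,hR⟩
        exact ⟨abs_le.1 h1, abs_le.1 h2, abs_le.1 h3, abs_le.1 h4⟩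
      · left
        push Not at hno
        obtain ⟨t, ht⟩ := hno
        have key : (t^2-4*x)*(t^2-x)^2 = 4*D := by
          linear_combination (t^3-3*x*t-2*y)*ht + 4*hy
        have hd1 : t^2-4*x ∣ 4*D := ⟨_, key.symm⟩
        have hd2 : t^2-x ∣ 4*D := ⟨(t^2-4*x)*(t^2-x), by rw [← key]; ring⟩
        have b1 := Int.le_of_dvd (by omega) ((abs_dvd _ _).2 hd1)
        have b2 := Int.le_of_dvd (by omega) ((abs_dvd _ _).2 hd2)
        have b1' := abs_le.1 b1
        have b2' := abs_le.1 b2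
        constructor <;> omega
    refine Set.Finite.subset ?_ hcover
    refine (Set.finite_Icc _ _).union (Set.Finite.biUnion ?_ ?_)
    · exact (Set.finite_Icc _ _).prod ((Set.finite_Icc _ _).prod ((Set.finite_Icc _ _).prod (Set.finite_Icc _ _)))
    · intro t _
      exact fiber4 D _ _ _ _ hD
  refine Set.Finite.subset (hx.biUnion (t := fun x => {x} ×ˢ Set.Icc (-|x^3+D|) |x^3+D|) ?_) ?_
  · intro x _
    exact (Set.finite_singleton x).prod (Set.finite_Icc _ _)
  · rintro ⟨x, y⟩ h
    change y^2 = x^3+D at h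
    refine Set.mem_biUnion (x := x) ⟨y, h⟩ ⟨rfl, ?_⟩
    rw [← h]
    apply abs_le.1
    rw [abs_of_nonneg (sq_nonneg y), ← sq_abs]
    nlinarith [Int.natAbs_le_self_sq y, Int.abs_eq_natAbs y, sq_abs y]
end

/-- There is a constant `c > 0` such that, for infinitely many integers `D`, the
Mordell equation `y² = x³ + D` has more than `c·(log |D|)^{17/19}` integral
solutions. -/
theorem stmt_19 :
    ∃ c : ℝ, 0 < c ∧
      {D : ℤ | c * Real.log |(D : ℝ)| ^ ((17 : ℝ) / 19) <
        (Set.ncard {p : ℤ × ℤ | p.2 ^ 2 = p.1 ^ 3 + D} : ℝ)}.Infinite :=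
  main_of k0_pos pt pt_HRep pt_inj mordell_finite
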